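/- (Solution of the Björling problem for non-minimal CMC surfaces: existence.) Let J ⊆ ℝ be an open interval, f₀ : J → su(2) a regular real analytic curve (f₀′ nonvanishing), and v : J → su(2) a nonvanishing real analytic vector field with ⟨v(x), f₀′(x)⟩ = 0 for all x ∈ J. Let H ≠ 0 be a real number. Then there exist an open set Σ ⊆ ℂ containing J × {0} and a smooth conformal immersion f : Σ → su(2) with constant mean curvature H such that f(x,0) = f₀(x) for all x ∈ J and, for each x ∈ J, ∂_y f(x,0) is a positive scalar multiple of v(x) (so the tangent plane of f along the curve is spanned by f₀′ and v). -/

import Mathlib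

open Matrix Complex

noncomputable section

attribute [local instance] Matrix.linftyOpNormedAddCommGroup Matrix.linftyOpNormedSpace
  Matrix.linftyOpNormedRing Matrix.linftyOpNormedAlgebra

/-- The space of 2×2 complex matrices. -/
abbrev M2 : Type := Matrix (Fin 2) (Fin 2) ℂ

/-- Basis vector `e₁` of su(2). -/
def e1 : M2 := !![0, -Complex.I; -Complex.I, 0]

/-- Basis vector `e₂` of su(2). -/
def e2 : M2 := !![0, 1; -1, 0]

/-- Basis vector `e₃` of su(2). -/
def e3 : M2 := !![Complex.I, 0; 0, -Complex.I]

/-- The inner product `⟨X,Y⟩ = -(1/2) tr (XY)` identifying su(2) with E³. -/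
def ip (X Y : M2) : ℂ := -(1/2 : ℂ) * (X * Y).trace

/-- Partial derivative in the `x`-direction. -/
def px (f : ℂ → M2) (z : ℂ) : M2 := fderiv ℝ f z 1

/-- Partial derivative in the `y`-direction. -/
def py (f : ℂ → M2) (z : ℂ) : M2 := fderiv ℝ f z Complex.I

/-- Wirtinger derivative `∂_z = (1/2)(∂_x - i ∂_y)`. -/
def dz (f : ℂ → M2) (z : ℂ) : M2 := (2:ℂ)⁻¹ • (px f z - Complex.I • py f z)

/-- Wirtinger derivative `∂_z̄ = (1/2)(∂_x + i ∂_y)`. -/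
def dzb (f : ℂ → M2) (z : ℂ) : M2 := (2:ℂ)⁻¹ • (px f z + Complex.I • py f z)

/-- `x`-derivative of a real-valued function on ℂ. -/
def pxR (u : ℂ → ℝ) (z : ℂ) : ℝ := fderiv ℝ u z 1

/-- `y`-derivative of a real-valued function on ℂ. -/
def pyR (u : ℂ → ℝ) (z : ℂ) : ℝ := fderiv ℝ u z Complex.I

/-- Wirtinger derivative `u_z` of a real-valued function. -/
def dzR (u : ℂ → ℝ) (z : ℂ) : ℂ := (2:ℂ)⁻¹ * ((pxR u z : ℂ) - Complex.I * (pyR u z : ℂ))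

/-- Wirtinger derivative `u_z̄` of a real-valued function. -/
def dzbR (u : ℂ → ℝ) (z : ℂ) : ℂ := (2:ℂ)⁻¹ * ((pxR u z : ℂ) + Complex.I * (pyR u z : ℂ))

/-- `x`-derivative of a complex-valued function on ℂ. -/
def pxC (q : ℂ → ℂ) (z : ℂ) : ℂ := fderiv ℝ q z 1

/-- `y`-derivative of a complex-valued function on ℂ. -/
def pyC (q : ℂ → ℂ) (z : ℂ) : ℂ := fderiv ℝ q z Complex.I

/-- Wirtinger derivative `∂_z` of a complex-valued function. -/
def dzC (q : ℂ → ℂ) (z : ℂ) : ℂ := (2:ℂ)⁻¹ * (pxC q z - Complex.I * pyC q z)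

/-- Wirtinger derivative `∂_z̄` of a complex-valued function. -/
def dzbC (q : ℂ → ℂ) (z : ℂ) : ℂ := (2:ℂ)⁻¹ * (pxC q z + Complex.I * pyC q z)

/-- `IsCMCImmersion S H f` says that `f` is a smooth su(2)-valued conformal immersion on
`S` which has constant mean curvature `H`: there are a smooth conformal factor `u` and a
smooth `SU(2)` coordinate frame `F` (so that `N = F e₃ F⁻¹` is the unit normal) with
`(1/8) e^{-2u} ⟨f_xx + f_yy, N⟩ = H`. -/
def IsCMCImmersion (S : Set ℂ) (H : ℝ) (f : ℂ → M2) : Prop :=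
  ContDiffOn ℝ (⊤ : ℕ∞) f S ∧
  (∀ z ∈ S, (f z)ᴴ = -(f z) ∧ (f z).trace = 0) ∧
  ∃ u : ℂ → ℝ, ContDiffOn ℝ (⊤ : ℕ∞) u S ∧
    (∀ z ∈ S,
      ip (px f z) (px f z) = ((4 * Real.exp (2 * u z) : ℝ) : ℂ) ∧
      ip (py f z) (py f z) = ((4 * Real.exp (2 * u z) : ℝ) : ℂ) ∧
      ip (px f z) (py f z) = 0) ∧
    ∃ F : ℂ → M2, ContDiffOn ℝ (⊤ : ℕ∞) F S ∧
      ∀ z ∈ S, (F z)ᴴ * F z = 1 ∧ (F z).det = 1 ∧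
        F z * e1 * (F z)⁻¹ = (((2 * Real.exp (u z))⁻¹ : ℝ) : ℂ) • px f z ∧
        F z * e2 * (F z)⁻¹ = (((2 * Real.exp (u z))⁻¹ : ℝ) : ℂ) • py f z ∧
        ip (px (px f) z + py (py f) z) (F z * e3 * (F z)⁻¹)
          = ((8 * Real.exp (2 * u z) * H : ℝ) : ℂ)

/-!
A conformal map `f` into `su(2) = E³` has constant mean curvature `H` exactly when
`Δf = 2H f_x × f_y`, that is `∂_z̄ f_z = -(iH/2) [f_z, f_z̄]`. Since the data are analytic, `z` and
`w = z̄` may be treated as independent complex variables; `p = f_z` and `q = f_w` then solve the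
Goursat system `p_w = β(p, q)`, `q_z = β(p, q)` with `p`, `q` prescribed on the diagonal `z = w`,
where the real axis sits. On the segment from `z` to `w`, rescaled to the unit interval, this is a
pair of Volterra integral equations carrying the factor `w - z`. At `z = w` the solution is the
initial datum, so these are solved near the diagonal by the analytic inverse function theorem, and
iterating the Volterra bound gives uniqueness.

Uniqueness gives the conjugation symmetry `q(z, z̄) = -p(z, z̄)ᴴ`, so on `w = z̄` the form
`p dz + q dz̄` is closed and integrates to a map `f` into the skew-Hermitian matrices. The bracket
is traceless and orthogonal to its arguments, hence `tr p` and `⟨p, p⟩` are constant in `w`; they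
vanish on the diagonal, which makes `f` traceless and conformal. The unit tangent frame of `f`
lifts to `SU(2)`, uniquely up to sign, because `Σ` may be taken contractible.
-/

open Filter Topology MeasureTheory

/-! ### Volterra operators on the unit square -/

section Volterra

open scoped unitInterval

variable {V : Type*} [NormedAddCommGroup V]

theorem continuous_comp_fst_projIcc (g : C(I × I, V)) :
    Continuous fun x : (I × I) × ℝ ↦ g (x.1.1, Set.projIcc 0 1 zero_le_one x.2) := by
  have : Continuous (Set.projIcc (0 : ℝ) 1 zero_le_one) := continuous_projIcc
  fun_prop

theorem intervalIntegrable_comp_projIcc (g : C(I × I, V)) (s : I) (x y : ℝ) :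
    IntervalIntegrable (fun τ ↦ g (s, Set.projIcc 0 1 zero_le_one τ)) volume x y :=
  ((continuous_comp_fst_projIcc g).comp
    (Continuous.prodMk_right ((s, s) : I × I))).intervalIntegrable x y

variable [NormedSpace ℂ V]

theorem continuous_integral_fst_snd (g : C(I × I, V)) :
    Continuous fun k : I × I ↦
      ∫ τ in (k.1 : ℝ)..k.2, g (k.1, Set.projIcc 0 1 zero_le_one τ) := by
  have hsplit (k : I × I) : ∫ τ in (k.1 : ℝ)..k.2, g (k.1, Set.projIcc 0 1 zero_le_one τ) =
      (∫ τ in (0 : ℝ)..k.2, g (k.1, Set.projIcc 0 1 zero_le_one τ)) -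
        ∫ τ in (0 : ℝ)..k.1, g (k.1, Set.projIcc 0 1 zero_le_one τ) := by
    rw [intervalIntegral.integral_interval_sub_left] <;>
      exact intervalIntegrable_comp_projIcc g _ _ _
  simp_rw [hsplit]
  have hg := continuous_comp_fst_projIcc g
  exact (intervalIntegral.continuous_parametric_intervalIntegral_of_continuous hg
    (by fun_prop)).sub
    (intervalIntegral.continuous_parametric_intervalIntegral_of_continuous hg (by fun_prop))

/-- The Volterra operator `g ↦ ((s, t) ↦ ∫ₛᵗ g (s, τ) dτ)` on continuous functions on the unit
square; the integrand is extended constantly outside `[0, 1]`. -/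
def volterra : C(I × I, V) →L[ℂ] C(I × I, V) :=
  LinearMap.mkContinuous
    { toFun := fun g ↦ ⟨_, continuous_integral_fst_snd g⟩
      map_add' := fun g h ↦ ContinuousMap.ext fun k ↦
        intervalIntegral.integral_add (intervalIntegrable_comp_projIcc g k.1 _ _)
          (intervalIntegrable_comp_projIcc h k.1 _ _)
      map_smul' := fun c g ↦ ContinuousMap.ext fun k ↦ intervalIntegral.integral_smul c _ }
    1 fun g ↦ by
      refine (ContinuousMap.norm_le _ (by positivity)).2 fun k ↦ ?_
      have hlen : |(k.2 : ℝ) - k.1| ≤ 1 :=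
        abs_le.2 ⟨by linarith [k.1.2.2, k.2.2.1], by linarith [k.1.2.1, k.2.2.2]⟩
      calc ‖∫ τ in (k.1 : ℝ)..k.2, g (k.1, Set.projIcc 0 1 zero_le_one τ)‖
          ≤ ‖g‖ * |(k.2 : ℝ) - k.1| :=
            intervalIntegral.norm_integral_le_of_norm_le_const fun τ _ ↦ g.norm_coe_le_norm _
        _ ≤ 1 * ‖g‖ := by rw [mul_comm]; gcongr

theorem volterra_apply (g : C(I × I, V)) (s t : I) :
    volterra g (s, t) = ∫ τ in (s : ℝ)..t, g (s, Set.projIcc 0 1 zero_le_one τ) := rfl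

theorem mem_unitInterval_of_mem_uIcc {s t : I} {τ : ℝ} (hτ : τ ∈ Set.uIcc (s : ℝ) t) :
    τ ∈ I :=
  Set.ordConnected_Icc.uIcc_subset s.2 t.2 hτ

theorem norm_volterra_le_of_norm_le_pow {g : C(I × I, V)} {C : ℝ} {n : ℕ}
    (hg : ∀ s t : I, ‖g (s, t)‖ ≤ C * |(t : ℝ) - s| ^ n) (s t : I) :
    ‖volterra g (s, t)‖ ≤ C * (|(t : ℝ) - s| ^ (n + 1) / (n + 1)) := by
  have hbound : ∀ τ ∈ Set.uIoc (s : ℝ) t,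
      ‖g (s, Set.projIcc 0 1 zero_le_one τ)‖ ≤ C * |τ - (s : ℝ)| ^ n := fun τ hτ ↦ by
    have hτI := mem_unitInterval_of_mem_uIcc (Set.uIoc_subset_uIcc hτ)
    simpa [Set.projIcc_of_mem _ hτI] using hg s (Set.projIcc 0 1 zero_le_one τ)
  have hint : IntegrableOn (fun τ ↦ C * |τ - (s : ℝ)| ^ n) (Set.uIoc (s : ℝ) t) :=
    ((by fun_prop : Continuous fun τ : ℝ ↦ C * |τ - (s : ℝ)| ^ n).intervalIntegrable _ _).def'
  calc ‖volterra g (s, t)‖ = ‖∫ τ in Set.uIoc (s : ℝ) t,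
        g (s, Set.projIcc 0 1 zero_le_one τ)‖ := by
        rw [volterra_apply, intervalIntegral.norm_integral_eq_norm_integral_uIoc]
    _ ≤ ∫ τ in Set.uIoc (s : ℝ) t, C * |τ - (s : ℝ)| ^ n :=
        norm_integral_le_of_norm_le hint
          ((ae_restrict_iff' measurableSet_uIoc).2 (.of_forall hbound))
    _ = C * (|(t : ℝ) - s| ^ (n + 1) / (n + 1)) := by
        rw [integral_const_mul, integral_pow_abs_sub_uIoc]

/-- The restriction of the unit square to the sub-square `[s, t] × [s, t]`, rescaled affinely. -/
def subSquare (s t : I) : C(I × I, I × I) where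
  toFun k := (Set.Icc.convexComb s t k.1, Set.Icc.convexComb s t k.2)

/-- The reflection of the unit square in its diagonal. -/
def squareSwap : C(I × I, I × I) := ⟨Prod.swap, continuous_swap⟩

theorem volterra_comp_subSquare (g : C(I × I, V)) (s₀ t₀ s t : I) :
    volterra g (subSquare s₀ t₀ (s, t)) =
      ((t₀ : ℝ) - s₀) • volterra (g.comp (subSquare s₀ t₀)) (s, t) := by
  have hcomb (x : ℝ) : (1 - x) * s₀ + x * t₀ = s₀ + (t₀ - s₀) * x := by ring
  simp only [subSquare, ContinuousMap.coe_mk, volterra_apply, Set.Icc.coe_convexComb, hcomb]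
  rw [← intervalIntegral.smul_integral_comp_add_mul]
  congr 1
  refine intervalIntegral.integral_congr fun τ hτ ↦ ?_
  have hτI := mem_unitInterval_of_mem_uIcc hτ
  have hproj : Set.projIcc 0 1 zero_le_one ((s₀ : ℝ) + (t₀ - s₀) * τ) =
      Set.Icc.convexComb s₀ t₀ (Set.projIcc 0 1 zero_le_one τ) := by
    rw [Set.projIcc_of_mem _ hτI, ← hcomb]
    exact Set.projIcc_val zero_le_one (Set.Icc.convexComb s₀ t₀ ⟨τ, hτI⟩)
  simp [hproj]

end Volterra

section PointwiseBilinear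

variable {𝕜 V : Type*} [NontriviallyNormedField 𝕜] [NormedAddCommGroup V] [NormedSpace 𝕜 V]

/-- The bilinear map `(g, h) ↦ (k ↦ β (g k) (h k))` on continuous functions on a compact space
induced by a continuous bilinear map `β`. -/
def pointwiseBilin (K : Type*) [TopologicalSpace K] [CompactSpace K] (β : V →L[𝕜] V →L[𝕜] V) :
    C(K, V) →L[𝕜] C(K, V) →L[𝕜] C(K, V) :=
  LinearMap.mkContinuous₂
    (LinearMap.mk₂ 𝕜 (fun g h : C(K, V) ↦ (⟨fun k ↦ β (g k) (h k), by fun_prop⟩ : C(K, V)))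
      (fun _ _ _ ↦ by ext; simp) (fun _ _ _ ↦ by ext; simp)
      (fun _ _ _ ↦ by ext; simp) (fun _ _ _ ↦ by ext; simp))
    ‖β‖ fun g h ↦ (ContinuousMap.norm_le _ (by positivity)).2 fun k ↦
      (β.le_opNorm₂ (g k) (h k)).trans (by gcongr <;> exact ContinuousMap.norm_coe_le_norm _ k)

@[simp]
theorem pointwiseBilin_apply {K : Type*} [TopologicalSpace K] [CompactSpace K]
    (β : V →L[𝕜] V →L[𝕜] V) (g h : C(K, V)) (k : K) :
    pointwiseBilin K β g h k = β (g k) (h k) := rfl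

theorem norm_bilin_sub_bilin_le (β : V →L[𝕜] V →L[𝕜] V) {x y x' y' : V} {D : ℝ}
    (hx : ‖x - x'‖ ≤ D) (hy : ‖y - y'‖ ≤ D) :
    ‖β x y - β x' y'‖ ≤ ‖β‖ * (‖x‖ + ‖y'‖) * D := by
  have hsplit : β x y - β x' y' = β x (y - y') + β (x - x') y' := by simp
  calc ‖β x y - β x' y'‖ ≤ ‖β‖ * ‖x‖ * ‖y - y'‖ + ‖β‖ * ‖x - x'‖ * ‖y'‖ := by
        rw [hsplit]; exact norm_add_le_of_le (β.le_opNorm₂ _ _) (β.le_opNorm₂ _ _)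
    _ ≤ ‖β‖ * ‖x‖ * D + ‖β‖ * D * ‖y'‖ := by gcongr
    _ = ‖β‖ * (‖x‖ + ‖y'‖) * D := by ring

end PointwiseBilinear

/-! ### The Goursat system on a square -/

theorem eq_of_norm_sub_le_pow_div_factorial {K V : Type*} [NormedAddCommGroup V]
    {g g' : K → V} {d : K → ℝ} {B C : ℝ}
    (h : ∀ (n : ℕ) k, ‖g k - g' k‖ ≤ B * C ^ n / n.factorial * d k ^ n) (k : K) :
    g k = g' k := by
  have hlim : Tendsto (fun n : ℕ ↦ B * C ^ n / n.factorial * d k ^ n) atTop (𝓝 0) := by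
    simpa [mul_pow, mul_div_assoc, mul_assoc, div_mul_eq_mul_div] using
      (FloorSemiring.tendsto_pow_div_factorial_atTop (C * d k)).const_mul B
  exact sub_eq_zero.1 (norm_le_zero_iff.1 (ge_of_tendsto' hlim fun n ↦ h n k))

section Goursat

open scoped unitInterval

variable {V : Type*} [NormedAddCommGroup V] [NormedSpace ℂ V]
variable {β : V →L[ℂ] V →L[ℂ] V} {a b : ℂ → V} {z w : ℂ} {P Q P' Q' : C(I × I, V)}

/-- The equation `p_w = β p q` with `p = a` on the diagonal, in integrated form. The functions
`P` and `Q` on the unit square stand for `p` and `q` on the square spanned by the segment from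
`z` to `w`: the point `(s, t)` stands for the pair of the points with parameters `s` and `t`. -/
def GoursatEq (β : V →L[ℂ] V →L[ℂ] V) (a : ℂ → V) (z w : ℂ) (P Q : C(I × I, V)) : Prop :=
  ∀ s t : I, P (s, t) = a (AffineMap.lineMap z w (s : ℝ)) +
    (w - z) • volterra (pointwiseBilin _ β P Q) (s, t)

/-- The Goursat system `p_w = β p q`, `q_z = β p q` with `p = a` and `q = b` on the diagonal, in
integrated form. Exchanging the two variables and the two unknowns turns the second equation
into the first one for the flipped bilinear map. -/
structure IsGoursatSol (β : V →L[ℂ] V →L[ℂ] V) (a b : ℂ → V) (z w : ℂ) (P Q : C(I × I, V)) :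
    Prop where
  left : GoursatEq β a z w P Q
  right : GoursatEq β.flip b z w (Q.comp squareSwap) (P.comp squareSwap)

theorem IsGoursatSol.swap (h : IsGoursatSol β a b z w P Q) :
    IsGoursatSol β.flip b a z w (Q.comp squareSwap) (P.comp squareSwap) :=
  ⟨h.right, h.left⟩

theorem GoursatEq.norm_sub_le_pow_succ (h : GoursatEq β a z w P Q)
    (h' : GoursatEq β a z w P' Q') {M C : ℝ} {n : ℕ}
    (hM : ∀ k, ‖β (P k) (Q k) - β (P' k) (Q' k)‖ ≤ M * (C * |(k.2 : ℝ) - k.1| ^ n)) (k : I × I) :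
    ‖P k - P' k‖ ≤ ‖w - z‖ * M * C / (n + 1) * |(k.2 : ℝ) - k.1| ^ (n + 1) := by
  obtain ⟨s, t⟩ := k
  calc ‖P (s, t) - P' (s, t)‖
      = ‖w - z‖ * ‖volterra (pointwiseBilin _ β P Q - pointwiseBilin _ β P' Q') (s, t)‖ := by
        rw [h s t, h' s t, add_sub_add_left_eq_sub, ← smul_sub, norm_smul, map_sub,
          ContinuousMap.sub_apply]
    _ ≤ ‖w - z‖ * (M * C * (|(t : ℝ) - s| ^ (n + 1) / (n + 1))) := by
        gcongr
        exact norm_volterra_le_of_norm_le_pow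
          (fun s t ↦ (hM (s, t)).trans_eq (mul_assoc _ _ _).symm) s t
    _ = ‖w - z‖ * M * C / (n + 1) * |(t : ℝ) - s| ^ (n + 1) := by ring

theorem IsGoursatSol.norm_sub_le_pow_div_factorial (h : IsGoursatSol β a b z w P Q)
    (h' : IsGoursatSol β a b z w P' Q') (n : ℕ) (k : I × I) :
    ‖P k - P' k‖ ≤ (‖P - P'‖ + ‖Q - Q'‖) *
        (‖w - z‖ * (‖β‖ * (‖P‖ + ‖Q'‖))) ^ n / n.factorial * |(k.2 : ℝ) - k.1| ^ n ∧
      ‖Q k - Q' k‖ ≤ (‖P - P'‖ + ‖Q - Q'‖) *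
        (‖w - z‖ * (‖β‖ * (‖P‖ + ‖Q'‖))) ^ n / n.factorial * |(k.2 : ℝ) - k.1| ^ n := by
  set B := ‖P - P'‖ + ‖Q - Q'‖
  set M := ‖β‖ * (‖P‖ + ‖Q'‖)
  induction n generalizing k with
  | zero =>
    have hP := (P - P').norm_coe_le_norm k
    have hQ := (Q - Q').norm_coe_le_norm k
    simp only [ContinuousMap.sub_apply] at hP hQ
    simp only [pow_zero, mul_one, Nat.factorial_zero, Nat.cast_one, div_one, B]
    constructor <;> linarith [norm_nonneg (P - P'), norm_nonneg (Q - Q')]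
  | succ n ih =>
    have hM (k : I × I) : ‖β (P k) (Q k) - β (P' k) (Q' k)‖ ≤
        M * (B * (‖w - z‖ * M) ^ n / n.factorial * |(k.2 : ℝ) - k.1| ^ n) := by
      refine (norm_bilin_sub_bilin_le β (ih k).1 (ih k).2).trans ?_
      refine mul_le_mul_of_nonneg_right ?_ ((norm_nonneg _).trans (ih k).1)
      exact mul_le_mul_of_nonneg_left
        (add_le_add (P.norm_coe_le_norm k) (Q'.norm_coe_le_norm k)) (norm_nonneg β)
    have hconst : ‖w - z‖ * M * (B * (‖w - z‖ * M) ^ n / n.factorial) / (n + 1) =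
        B * (‖w - z‖ * M) ^ (n + 1) / (n + 1).factorial := by
      rw [Nat.factorial_succ]; push_cast; field_simp; ring
    have hstepP := h.left.norm_sub_le_pow_succ h'.left hM k
    have hstepQ := h.right.norm_sub_le_pow_succ h'.right (M := M)
      (fun k ↦ by simpa [squareSwap, abs_sub_comm] using hM k.swap) k.swap
    rw [hconst] at hstepP hstepQ
    exact ⟨hstepP, by simpa [squareSwap, abs_sub_comm] using hstepQ⟩

theorem IsGoursatSol.unique (h : IsGoursatSol β a b z w P Q)
    (h' : IsGoursatSol β a b z w P' Q') : P = P' ∧ Q = Q' :=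
  ⟨ContinuousMap.ext <| eq_of_norm_sub_le_pow_div_factorial fun n k ↦
      (h.norm_sub_le_pow_div_factorial h' n k).1,
    ContinuousMap.ext <| eq_of_norm_sub_le_pow_div_factorial fun n k ↦
      (h.norm_sub_le_pow_div_factorial h' n k).2⟩

theorem lineMap_convexComb (z w : ℂ) (s t r : I) :
    AffineMap.lineMap z w (Set.Icc.convexComb s t r : ℝ) =
      AffineMap.lineMap (AffineMap.lineMap z w (s : ℝ) : ℂ) (AffineMap.lineMap z w (t : ℝ))
        (r : ℝ) := by
  simp only [AffineMap.lineMap_apply_module', Set.Icc.coe_convexComb, Complex.real_smul]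
  push_cast
  ring

theorem GoursatEq.restrict (h : GoursatEq β a z w P Q) (s t : I) :
    GoursatEq β a (AffineMap.lineMap z w (s : ℝ)) (AffineMap.lineMap z w (t : ℝ))
      (P.comp (subSquare s t)) (Q.comp (subSquare s t)) := by
  intro s' t'
  have hsegment : (AffineMap.lineMap z w (t : ℝ) : ℂ) - AffineMap.lineMap z w (s : ℝ) =
      (w - z) * ((t - s : ℝ) : ℂ) := by
    simp only [AffineMap.lineMap_apply_module', Complex.real_smul]
    push_cast
    ring
  rw [hsegment, ← lineMap_convexComb, mul_smul, Complex.coe_smul]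
  have hvolterra := volterra_comp_subSquare (pointwiseBilin _ β P Q) s t s' t'
  exact (h _ _).trans (congrArg (fun X ↦ _ + (w - z) • X) hvolterra)

theorem IsGoursatSol.restrict (h : IsGoursatSol β a b z w P Q) (s t : I) :
    IsGoursatSol β a b (AffineMap.lineMap z w (s : ℝ)) (AffineMap.lineMap z w (t : ℝ))
      (P.comp (subSquare s t)) (Q.comp (subSquare s t)) :=
  ⟨h.left.restrict s t, h.right.restrict s t⟩

open Classical in
/-- The value at `(z, w)` of the first component `p` of the solution of the Goursat system
`p_w = β p q`, `q_z = β p q`, `p = a` and `q = b` on the diagonal. The solution is unique, so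
this does not depend on the choice made here; the junk value where there is none is `0`. -/
def goursatSol (β : V →L[ℂ] V →L[ℂ] V) (a b : ℂ → V) (x : ℂ × ℂ) : V :=
  if h : ∃ P Q, IsGoursatSol β a b x.1 x.2 P Q then h.choose (0, 1) else 0

theorem IsGoursatSol.goursatSol_eq (h : IsGoursatSol β a b z w P Q) :
    goursatSol β a b (z, w) = P (0, 1) := by
  have hex : ∃ P Q, IsGoursatSol β a b (z, w).1 (z, w).2 P Q := ⟨P, Q, h⟩
  obtain ⟨Q', hQ'⟩ := hex.choose_spec
  rw [goursatSol, dif_pos hex, (hQ'.unique h).1]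

theorem IsGoursatSol.goursatSol_lineMap (h : IsGoursatSol β a b z w P Q) (s t : I) :
    goursatSol β a b (AffineMap.lineMap z w (s : ℝ), AffineMap.lineMap z w (t : ℝ)) = P (s, t) := by
  simpa [subSquare] using (h.restrict s t).goursatSol_eq

theorem IsGoursatSol.goursatSol_flip_lineMap (h : IsGoursatSol β a b z w P Q) (s t : I) :
    goursatSol β.flip b a (AffineMap.lineMap z w (t : ℝ), AffineMap.lineMap z w (s : ℝ)) =
      Q (s, t) :=
  h.swap.goursatSol_lineMap t s

theorem IsGoursatSol.goursatSol_eq_add_integral (h : IsGoursatSol β a b z w P Q) :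
    goursatSol β a b (z, w) = a z + (w - z) • ∫ τ in (0 : ℝ)..1,
      β (goursatSol β a b (z, AffineMap.lineMap z w τ))
        (goursatSol β.flip b a (AffineMap.lineMap z w τ, z)) := by
  rw [h.goursatSol_eq, h.left, volterra_apply]
  simp only [Set.Icc.coe_zero, Set.Icc.coe_one, AffineMap.lineMap_apply_zero]
  congr 2
  refine intervalIntegral.integral_congr fun τ hτ ↦ ?_
  rw [Set.uIcc_of_le zero_le_one] at hτ
  have hp := h.goursatSol_lineMap 0 ⟨τ, hτ⟩
  have hq := h.goursatSol_flip_lineMap 0 ⟨τ, hτ⟩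
  simp only [Set.Icc.coe_zero, AffineMap.lineMap_apply_zero] at hp hq
  simp [hp, hq, Set.projIcc_of_mem _ hτ]

theorem IsGoursatSol.goursatSol_diag (h : IsGoursatSol β a b z z P Q) :
    goursatSol β a b (z, z) = a z := by
  simpa using h.goursatSol_eq_add_integral

end Goursat

/-! ### Conjugation symmetry -/

section Conjugation

open scoped unitInterval ComplexConjugate

variable {V : Type*} [NormedAddCommGroup V] [NormedSpace ℂ V]
variable {β : V →L[ℂ] V →L[ℂ] V} {θ : V →L[ℝ] V}

/-- `θ` is an antilinear involution (a conjugation of `V`) which is an anti-automorphism for the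
product `β`. It plays the role of complex conjugation on the complexification of `su(2)`, for
which `β` is `-i` times a real bracket. -/
structure IsAntiConj (β : V →L[ℂ] V →L[ℂ] V) (θ : V →L[ℝ] V) : Prop where
  map_smul (c : ℂ) (X : V) : θ (c • X) = conj c • θ X
  involutive : Function.Involutive θ
  map_bilin (X Y : V) : θ (β X Y) = β (θ Y) (θ X)

theorem IsAntiConj.flip (hθ : IsAntiConj β θ) : IsAntiConj β.flip θ :=
  ⟨hθ.map_smul, hθ.involutive, fun X Y ↦ hθ.map_bilin Y X⟩

theorem conj_lineMap (z w : ℂ) (s : ℝ) :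
    conj (AffineMap.lineMap z w s) = AffineMap.lineMap (conj z) (conj w) s := by
  simp [AffineMap.lineMap_apply_module']

variable [CompleteSpace V] {a b : ℂ → V} {z w : ℂ} {P Q : C(I × I, V)}

theorem IsAntiConj.goursatEq (hθ : IsAntiConj β θ) (h : GoursatEq β a z w P Q) :
    GoursatEq β.flip (fun ζ ↦ θ (a (conj ζ))) (conj z) (conj w)
      ((θ : C(V, V)).comp P) ((θ : C(V, V)).comp Q) := by
  intro s t
  have hvolterra : θ (volterra (pointwiseBilin _ β P Q) (s, t)) =
      volterra (pointwiseBilin _ β.flip ((θ : C(V, V)).comp P) ((θ : C(V, V)).comp Q)) (s, t) := by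
    rw [volterra_apply, volterra_apply, ← θ.intervalIntegral_comp_comm
      (intervalIntegrable_comp_projIcc (pointwiseBilin _ β P Q) s (s : ℝ) t)]
    simp [hθ.map_bilin]
  simp [h s t, hθ.map_smul, hvolterra, ← conj_lineMap]

theorem IsAntiConj.isGoursatSol (hθ : IsAntiConj β θ) (h : IsGoursatSol β a b z w P Q) :
    IsGoursatSol β.flip (fun ζ ↦ θ (a (conj ζ))) (fun ζ ↦ θ (b (conj ζ))) (conj z) (conj w)
      ((θ : C(V, V)).comp P) ((θ : C(V, V)).comp Q) :=
  ⟨hθ.goursatEq h.left, hθ.flip.goursatEq h.right⟩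

theorem IsAntiConj.goursatSol_flip_conj (hθ : IsAntiConj β θ)
    (h : IsGoursatSol β a (fun ζ ↦ θ (a (conj ζ))) z w P Q) :
    goursatSol β.flip (fun ζ ↦ θ (a (conj ζ))) a (conj z, conj w) =
      θ (goursatSol β a (fun ζ ↦ θ (a (conj ζ))) (z, w)) := by
  have hconj := hθ.isGoursatSol h
  simp only [Complex.conj_conj, hθ.involutive (a _)] at hconj
  rw [hconj.goursatSol_eq, h.goursatSol_eq]
  rfl

end Conjugation

/-! ### Substituting elements of a Banach algebra into a power series -/

section PowerSeries

open scoped NNReal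

theorem exists_coeff_bound_and_hasSum {𝕜 V : Type*} [NontriviallyNormedField 𝕜]
    [NormedAddCommGroup V] [NormedSpace 𝕜 V] {g : 𝕜 → V} {x₀ : 𝕜} (hg : AnalyticAt 𝕜 g x₀) :
    ∃ c : ℕ → V, ∃ ρ : ℝ≥0, 0 < ρ ∧ (∃ C, ∀ n, ‖c n‖ * (ρ : ℝ) ^ n ≤ C) ∧
      ∀ y ∈ Metric.ball 0 (ρ : ℝ), HasSum (fun n ↦ y ^ n • c n) (g (x₀ + y)) := by
  obtain ⟨p, r, hp⟩ := hg
  obtain ⟨ρ, hρ, hρr⟩ := ENNReal.lt_iff_exists_nnreal_btwn.1 hp.r_pos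
  obtain ⟨C, -, hC⟩ := p.norm_mul_pow_le_of_lt_radius (hρr.trans_le hp.r_le)
  refine ⟨p.coeff, ρ, by exact_mod_cast hρ, ⟨C, fun n ↦ ?_⟩, fun y hy ↦ ?_⟩
  · rw [← FormalMultilinearSeries.norm_apply_eq_norm_coef]
    exact hC n
  · rw [← Metric.eball_coe] at hy
    simpa only [FormalMultilinearSeries.apply_eq_pow_smul_coeff] using
      hp.hasSum (Metric.eball_subset_eball hρr.le hy)

theorem exists_analyticOnNhd_hasSum_pow {𝕜 A W : Type*} [NontriviallyNormedField 𝕜]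
    [NormedRing A] [NormOneClass A] [NormedAlgebra 𝕜 A] [NormedAddCommGroup W] [NormedSpace 𝕜 W]
    [CompleteSpace W] {L : ℕ → A →L[𝕜] W} {ρ : ℝ≥0} (hρ : 0 < ρ) {C : ℝ}
    (hL : ∀ n, ‖L n‖ * (ρ : ℝ) ^ n ≤ C) :
    ∃ Φ : A → W, AnalyticOnNhd 𝕜 Φ (Metric.ball 0 ρ) ∧
      ∀ y ∈ Metric.ball 0 (ρ : ℝ), HasSum (fun n ↦ L n (y ^ n)) (Φ y) := by
  let p : FormalMultilinearSeries 𝕜 A W := fun n ↦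
    (L n).compContinuousMultilinearMap (ContinuousMultilinearMap.mkPiAlgebraFin 𝕜 n A)
  have hp_norm (n : ℕ) : ‖p n‖ ≤ ‖L n‖ := by
    simpa using ContinuousLinearMap.norm_compContinuousMultilinearMap_le (L n)
      (ContinuousMultilinearMap.mkPiAlgebraFin 𝕜 n A)
  have hradius : (ρ : ENNReal) ≤ p.radius := p.le_radius_of_bound C fun n ↦
    (mul_le_mul_of_nonneg_right (hp_norm n) (by positivity)).trans (hL n)
  have hsum := p.hasFPowerSeriesOnBall (lt_of_lt_of_le (by exact_mod_cast hρ) hradius)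
  rw [← Metric.eball_coe]
  refine ⟨p.sum, hsum.analyticOnNhd.mono (Metric.eball_subset_eball hradius), fun y hy ↦ ?_⟩
  simpa [p] using p.hasSum (Metric.eball_subset_eball hradius hy)

theorem exists_analyticAt_comp_const {K 𝕜 V : Type*} [TopologicalSpace K] [CompactSpace K]
    [Nonempty K] [NontriviallyNormedField 𝕜] [NormedAddCommGroup V] [NormedSpace 𝕜 V]
    [CompleteSpace V] {a : 𝕜 → V} {x₀ : 𝕜} (ha : AnalyticAt 𝕜 a x₀) :
    ∃ A : C(K, 𝕜) → C(K, V), AnalyticAt 𝕜 A (ContinuousMap.const K x₀) ∧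
      ∀ᶠ h in 𝓝 (ContinuousMap.const K x₀), ∀ k, A h k = a (h k) := by
  obtain ⟨c, ρ, hρ, ⟨C, hC⟩, ha⟩ := exists_coeff_bound_and_hasSum ha
  let L (n : ℕ) : C(K, 𝕜) →L[𝕜] C(K, V) :=
    (ContinuousLinearMap.toSpanSingleton 𝕜 (c n)).compLeftContinuous 𝕜 K
  have hL_norm (n : ℕ) : ‖L n‖ ≤ ‖c n‖ := ContinuousLinearMap.opNorm_le_bound _ (norm_nonneg _)
    fun h ↦ (ContinuousMap.norm_le _ (by positivity)).2 fun k ↦ by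
      simpa [L, norm_smul, mul_comm] using
        mul_le_mul_of_nonneg_left (h.norm_coe_le_norm k) (norm_nonneg (c n))
  obtain ⟨Φ, hΦ, hΦ_sum⟩ := exists_analyticOnNhd_hasSum_pow hρ (L := L) fun n ↦
    (mul_le_mul_of_nonneg_right (hL_norm n) (by positivity)).trans (hC n)
  have hball : Metric.ball (ContinuousMap.const K x₀) ρ ∈ 𝓝 (ContinuousMap.const K x₀) :=
    Metric.ball_mem_nhds _ hρ
  refine ⟨fun h ↦ Φ (h - ContinuousMap.const K x₀), ?_, ?_⟩
  · refine AnalyticAt.comp_of_eq (hΦ 0 (Metric.mem_ball_self hρ)) ?_ (sub_self _)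
    exact analyticAt_id.sub analyticAt_const
  · filter_upwards [hball] with h hh k
    have hy : h - ContinuousMap.const K x₀ ∈ Metric.ball 0 (ρ : ℝ) := by
      simpa [dist_eq_norm] using hh
    have hyk : h k - x₀ ∈ Metric.ball 0 (ρ : ℝ) := by
      rw [mem_ball_zero_iff] at hy ⊢
      exact (ContinuousMap.norm_coe_le_norm (h - ContinuousMap.const K x₀) k).trans_lt hy
    have hsum := (ContinuousMap.evalCLM 𝕜 k).hasSum (hΦ_sum _ hy)
    simpa using hsum.unique (by simpa [L] using ha _ hyk)

theorem exists_differentiableOn_eqOn_real {V : Type*} [NormedAddCommGroup V] [NormedSpace ℂ V]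
    [CompleteSpace V] {g : ℝ → V} {x₀ : ℝ} (hg : AnalyticAt ℝ g x₀) :
    ∃ r > 0, ∃ h : ℂ → V, DifferentiableOn ℂ h (Metric.ball (x₀ : ℂ) r) ∧
      ∀ y : ℝ, (y : ℂ) ∈ Metric.ball (x₀ : ℂ) r → h y = g y := by
  obtain ⟨c, ρ, hρ, ⟨C, hC⟩, hg⟩ := exists_coeff_bound_and_hasSum hg
  obtain ⟨Φ, hΦ, hΦ_sum⟩ := exists_analyticOnNhd_hasSum_pow hρ
    (L := fun n ↦ ContinuousLinearMap.toSpanSingleton ℂ (c n)) (by simpa using hC)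
  have hmaps : Set.MapsTo (fun z : ℂ ↦ z - x₀) (Metric.ball (x₀ : ℂ) ρ) (Metric.ball 0 ρ) :=
    fun z hz ↦ by simpa [dist_eq_norm] using hz
  refine ⟨ρ, hρ, fun z ↦ Φ (z - x₀), ?_, fun y hy ↦ ?_⟩
  · exact hΦ.differentiableOn.comp (by fun_prop) hmaps
  · have hsum := hΦ_sum _ (hmaps hy)
    have hy' : y - x₀ ∈ Metric.ball 0 (ρ : ℝ) := by
      simpa [← Complex.ofReal_sub, Complex.norm_real] using hmaps hy
    have hreal := hg _ hy'
    rw [add_sub_cancel] at hreal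
    refine hsum.unique ?_
    simpa [← Complex.ofReal_sub, ← Complex.ofReal_pow, Complex.coe_smul] using hreal

end PowerSeries

section RealAxis

variable {V : Type*} [NormedAddCommGroup V] [NormedSpace ℂ V]

theorem re_mem_ball_ofReal {x₀ r : ℝ} {ζ : ℂ} (hζ : ζ ∈ Metric.ball (x₀ : ℂ) r) :
    (ζ.re : ℂ) ∈ Metric.ball (x₀ : ℂ) r := by
  rw [Metric.mem_ball, dist_eq_norm] at hζ ⊢
  calc ‖(ζ.re - x₀ : ℂ)‖ = |(ζ - x₀).re| := by
        rw [← Complex.ofReal_sub, Complex.norm_real, Real.norm_eq_abs, sub_re, ofReal_re]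
    _ ≤ ‖ζ - x₀‖ := abs_re_le_norm _
    _ < r := hζ

theorem eventually_eq_of_eventually_eq_ofReal {g h : ℂ → V} {x₀ : ℝ} (hg : AnalyticAt ℂ g x₀)
    (hh : AnalyticAt ℂ h x₀) (heq : ∀ᶠ x : ℝ in 𝓝 x₀, g x = h x) : g =ᶠ[𝓝 (x₀ : ℂ)] h := by
  have htendsto : Tendsto ofReal (𝓝[≠] x₀) (𝓝[≠] (x₀ : ℂ)) :=
    continuous_ofReal.continuousWithinAt.tendsto_nhdsWithin fun _ hx ↦ ofReal_injective.ne hx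
  exact (hg.frequently_eq_iff_eventually_eq hh).1
    (htendsto.frequently (heq.filter_mono nhdsWithin_le_nhds).frequently)

theorem exists_forall_eqOn {ι X Y : Type*} [Nonempty Y] {U : ι → Set X} {h : ι → X → Y}
    (heq : ∀ i j, Set.EqOn (h i) (h j) (U i ∩ U j)) : ∃ g : X → Y, ∀ i, Set.EqOn g (h i) (U i) := by
  have hval (x : X) : ∃ y, ∀ i, x ∈ U i → y = h i x := by
    by_cases hx : ∃ i, x ∈ U i
    · obtain ⟨i, hi⟩ := hx
      exact ⟨h i x, fun j hj ↦ heq i j ⟨hi, hj⟩⟩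
    · exact ⟨Classical.arbitrary Y, fun i hi ↦ (hx ⟨i, hi⟩).elim⟩
  choose g hg using hval
  exact ⟨g, fun i x hx ↦ hg x i hx⟩

variable [CompleteSpace V]

theorem eqOn_of_eqOn_ofReal {g h : ℂ → V} {U : Set ℂ} (hU : IsOpen U) (hUc : IsPreconnected U)
    (hg : DifferentiableOn ℂ g U) (hh : DifferentiableOn ℂ h U) {x₀ : ℝ} (hx₀ : (x₀ : ℂ) ∈ U)
    (heq : ∀ x : ℝ, (x : ℂ) ∈ U → g x = h x) : Set.EqOn g h U := by
  refine (hg.analyticOnNhd hU).eqOn_of_preconnected_of_eventuallyEq (hh.analyticOnNhd hU) hUc hx₀ ?_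
  refine eventually_eq_of_eventually_eq_ofReal (hg.analyticAt (hU.mem_nhds hx₀))
    (hh.analyticAt (hU.mem_nhds hx₀)) ?_
  filter_upwards [continuous_ofReal.continuousAt.eventually (hU.mem_nhds hx₀)] with x hx
  exact heq x hx

theorem exists_analyticAt_eqOn_real {J : Set ℝ} {g : ℝ → V} (hg : AnalyticOnNhd ℝ g J) :
    ∃ h : ℂ → V, ∀ x ∈ J, AnalyticAt ℂ h x ∧ h x = g x := by
  choose r hr h hdiff hreal using fun x : J ↦ exists_differentiableOn_eqOn_real (hg x x.2)
  have hcompat (x y : J) : Set.EqOn (h x) (h y)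
      (Metric.ball ((x : ℝ) : ℂ) (r x) ∩ Metric.ball ((y : ℝ) : ℂ) (r y)) := fun ζ hζ ↦
    eqOn_of_eqOn_ofReal (Metric.isOpen_ball.inter Metric.isOpen_ball)
      ((convex_ball _ _).inter (convex_ball _ _)).isPreconnected
      ((hdiff x).mono Set.inter_subset_left) ((hdiff y).mono Set.inter_subset_right)
      ⟨re_mem_ball_ofReal hζ.1, re_mem_ball_ofReal hζ.2⟩
      (fun t ht ↦ (hreal x t ht.1).trans (hreal y t ht.2).symm) hζ
  obtain ⟨G, hG⟩ := exists_forall_eqOn hcompat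
  refine ⟨G, fun x hx ↦ ?_⟩
  have hball := Metric.ball_mem_nhds (x : ℂ) (hr ⟨x, hx⟩)
  have hx_mem := mem_of_mem_nhds hball
  exact ⟨((hdiff ⟨x, hx⟩).analyticAt hball).congr
    ((hG ⟨x, hx⟩).symm.eventuallyEq_of_mem hball),
    (hG ⟨x, hx⟩ hx_mem).trans (hreal ⟨x, hx⟩ x hx_mem)⟩

end RealAxis

/-! ### Analytic dependence of the solution on the end points -/

section Resolvent

variable {𝕜 E : Type*} [RCLike 𝕜] [NormedAddCommGroup E] [NormedSpace 𝕜 E]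

/-- The linear shear `(c, y) ↦ (c, y - c • k)`. -/
def shear (𝕜 : Type*) {E : Type*} [NontriviallyNormedField 𝕜] [NormedAddCommGroup E]
    [NormedSpace 𝕜 E] (k : E) : (𝕜 × E) ≃L[𝕜] 𝕜 × E :=
  ContinuousLinearEquiv.equivOfInverse
    ((ContinuousLinearMap.fst 𝕜 𝕜 E).prod
      (ContinuousLinearMap.snd 𝕜 𝕜 E - (ContinuousLinearMap.fst 𝕜 𝕜 E).smulRight k))
    ((ContinuousLinearMap.fst 𝕜 𝕜 E).prod
      (ContinuousLinearMap.snd 𝕜 𝕜 E + (ContinuousLinearMap.fst 𝕜 𝕜 E).smulRight k))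
    (fun x ↦ by simp) (fun x ↦ by simp)

theorem hasFDerivAt_sub_smul {N : E → E} {y₀ : E} (hN : DifferentiableAt 𝕜 N y₀) :
    HasFDerivAt (fun x : 𝕜 × E ↦ (x.1, x.2 - x.1 • N x.2))
      (shear 𝕜 (N y₀) : 𝕜 × E →L[𝕜] 𝕜 × E) (0, y₀) := by
  have hN_snd : HasFDerivAt (fun x : 𝕜 × E ↦ N x.2)
      ((fderiv 𝕜 N y₀).comp (ContinuousLinearMap.snd 𝕜 𝕜 E)) (0, y₀) :=
    hN.hasFDerivAt.comp (0, y₀) hasFDerivAt_snd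
  refine (hasFDerivAt_fst.prodMk
    (hasFDerivAt_snd.sub (hasFDerivAt_fst.smul hN_snd))).congr_fderiv ?_
  ext x <;> simp [shear]

theorem exists_analyticAt_eq_add_smul [CompleteSpace E] {N : E → E} (y₀ : E)
    (hN : ContDiffAt 𝕜 ⊤ N y₀) :
    ∃ Ψ : 𝕜 × E → E, AnalyticAt 𝕜 Ψ (0, y₀) ∧
      ∀ᶠ x in 𝓝 ((0, y₀) : 𝕜 × E), Ψ x = x.2 + x.1 • N (Ψ x) := by
  have hcont : ContDiffAt 𝕜 ⊤ (fun x : 𝕜 × E ↦ (x.1, x.2 - x.1 • N x.2)) (0, y₀) :=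
    contDiffAt_fst.prodMk
      (contDiffAt_snd.sub (contDiffAt_fst.smul (hN.comp (0, y₀) contDiffAt_snd)))
  have hderiv := hasFDerivAt_sub_smul (hN.differentiableAt (by simp))
  have hinv := hcont.to_localInverse hderiv (by simp)
  have hright := (hcont.hasStrictFDerivAt' hderiv (by simp)).eventually_right_inverse
  simp only [zero_smul, sub_zero] at hinv hright
  refine ⟨fun x ↦ (hcont.localInverse hderiv (by simp) x).2, hinv.snd.analyticAt, ?_⟩
  filter_upwards [hright] with x hx
  obtain ⟨hfst, hsnd⟩ := Prod.ext_iff.1 hx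
  rw [sub_eq_iff_eq_add] at hsnd
  exact hsnd.trans (by rw [← hfst]; rfl)

end Resolvent

section GoursatLocal

open scoped unitInterval

variable {V : Type*} [NormedAddCommGroup V] [NormedSpace ℂ V]

theorem contDiff_volterra_pair (β : V →L[ℂ] V →L[ℂ] V) :
    ContDiff ℂ ⊤ fun y : C(I × I, V) × C(I × I, V) ↦
      (volterra (pointwiseBilin _ β y.1 y.2), squareSwap.compCLM ℂ V (volterra
        (pointwiseBilin _ β.flip (squareSwap.compCLM ℂ V y.2) (squareSwap.compCLM ℂ V y.1)))) := by
  fun_prop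

variable [CompleteSpace V]
variable {β : V →L[ℂ] V →L[ℂ] V} {a b : ℂ → V} {x₀ : ℂ}

/-- The function `(s, t) ↦ (1 - s) z + s w` on the unit square. -/
def segmentFst (x : ℂ × ℂ) : C(I × I, ℂ) :=
  ContinuousMap.const _ x.1 + (x.2 - x.1) • ⟨fun k ↦ ((k.1 : ℝ) : ℂ), by fun_prop⟩

theorem segmentFst_apply (x : ℂ × ℂ) (k : I × I) :
    segmentFst x k = AffineMap.lineMap x.1 x.2 (k.1 : ℝ) := by
  simp [segmentFst, AffineMap.lineMap_apply_module', mul_comm, add_comm]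

theorem segmentFst_diag (z : ℂ) : segmentFst (z, z) = ContinuousMap.const _ z := by
  ext k
  simp [segmentFst]

theorem analyticAt_segmentFst (x : ℂ × ℂ) : AnalyticAt ℂ segmentFst x := by
  have hconst : AnalyticAt ℂ (fun x : ℂ × ℂ ↦ ContinuousMap.const (I × I) x.1) x :=
    (ContinuousLinearMap.const ℂ (I × I) : ℂ →L[ℂ] C(I × I, ℂ)).analyticAt _ |>.comp analyticAt_fst
  exact hconst.add ((analyticAt_snd.sub analyticAt_fst).smul analyticAt_const)

theorem exists_analyticAt_comp_segmentFst (ha : AnalyticAt ℂ a x₀) :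
    ∃ A : ℂ × ℂ → C(I × I, V), AnalyticAt ℂ A (x₀, x₀) ∧
      ∀ᶠ x in 𝓝 (x₀, x₀), ∀ s t : I, A x (s, t) = a (AffineMap.lineMap x.1 x.2 (s : ℝ)) := by
  obtain ⟨A, hA, hA_eq⟩ := exists_analyticAt_comp_const (K := I × I) ha
  rw [← segmentFst_diag] at hA hA_eq
  have hseg := analyticAt_segmentFst (x₀, x₀)
  refine ⟨fun x ↦ A (segmentFst x), hA.comp hseg, ?_⟩
  filter_upwards [hseg.continuousAt.eventually hA_eq] with x hx s t
  rw [hx, segmentFst_apply]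

theorem exists_analyticAt_isGoursatSol (β : V →L[ℂ] V →L[ℂ] V) (ha : AnalyticAt ℂ a x₀)
    (hb : AnalyticAt ℂ b x₀) :
    ∃ P Q : ℂ × ℂ → C(I × I, V), AnalyticAt ℂ P (x₀, x₀) ∧
      ∀ᶠ x in 𝓝 (x₀, x₀), IsGoursatSol β a b x.1 x.2 (P x) (Q x) := by
  obtain ⟨A, hA, hA_eq⟩ := exists_analyticAt_comp_segmentFst ha
  obtain ⟨B, hB, hB_eq⟩ := exists_analyticAt_comp_segmentFst hb
  have hdata : AnalyticAt ℂ
      (fun x : ℂ × ℂ ↦ (x.2 - x.1, A x, squareSwap.compCLM ℂ V (B x))) (x₀, x₀) :=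
    (analyticAt_snd.sub analyticAt_fst).prod
      (hA.prod (((squareSwap.compCLM ℂ V).analyticAt _).comp hB))
  obtain ⟨Ψ, hΨ, hΨ_eq⟩ := exists_analyticAt_eq_add_smul
    (A (x₀, x₀), squareSwap.compCLM ℂ V (B (x₀, x₀))) (contDiff_volterra_pair β).contDiffAt
  have hsol := hΨ.comp_of_eq hdata (by simp)
  have hsol_eq := hdata.continuousAt.tendsto.eventually (by simpa using hΨ_eq)
  refine ⟨_, fun x ↦ (Ψ (x.2 - x.1, A x, squareSwap.compCLM ℂ V (B x))).2,
    analyticAt_fst.comp hsol, ?_⟩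
  filter_upwards [hsol_eq, hA_eq, hB_eq] with x hx hAx hBx
  obtain ⟨hfst, hsnd⟩ := Prod.ext_iff.1 hx
  refine ⟨fun s t ↦ ?_, fun s t ↦ ?_⟩
  · rw [← hAx s t]
    exact congrArg (· (s, t)) hfst
  · rw [← hBx s t]
    exact congrArg (· (t, s)) hsnd

theorem analyticAt_goursatSol (β : V →L[ℂ] V →L[ℂ] V) (ha : AnalyticAt ℂ a x₀)
    (hb : AnalyticAt ℂ b x₀) : AnalyticAt ℂ (goursatSol β a b) (x₀, x₀) := by
  obtain ⟨P, Q, hP, hsol⟩ := exists_analyticAt_isGoursatSol β ha hb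
  refine (((ContinuousMap.evalCLM ℂ ((0, 1) : I × I)).analyticAt _).comp hP).congr ?_
  filter_upwards [hsol] with x hx
  exact hx.goursatSol_eq.symm

end GoursatLocal

/-! ### The differential equation and its first integrals -/

section GoursatDerivative

variable {V : Type*} [NormedAddCommGroup V] [NormedSpace ℂ V]
variable {β : V →L[ℂ] V →L[ℂ] V} {a b : ℂ → V} {x₀ : ℂ}

/-- On the bidisc `ball x₀ r ×ˢ ball x₀ r` the Goursat system has a solution, and both
components of it are analytic. -/
structure IsGoursatBall (β : V →L[ℂ] V →L[ℂ] V) (a b : ℂ → V) (x₀ : ℂ) (r : ℝ) : Prop where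
  exists_isGoursatSol {z w : ℂ} (hz : z ∈ Metric.ball x₀ r) (hw : w ∈ Metric.ball x₀ r) :
    ∃ P Q, IsGoursatSol β a b z w P Q
  analyticAt {z w : ℂ} (hz : z ∈ Metric.ball x₀ r) (hw : w ∈ Metric.ball x₀ r) :
    AnalyticAt ℂ (goursatSol β a b) (z, w)
  analyticAt_flip {z w : ℂ} (hz : z ∈ Metric.ball x₀ r) (hw : w ∈ Metric.ball x₀ r) :
    AnalyticAt ℂ (goursatSol β.flip b a) (z, w)

theorem IsGoursatBall.goursatSol_diag {r : ℝ} (h : IsGoursatBall β a b x₀ r) {z : ℂ}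
    (hz : z ∈ Metric.ball x₀ r) : goursatSol β a b (z, z) = a z :=
  have ⟨_, _, hsol⟩ := h.exists_isGoursatSol hz hz
  hsol.goursatSol_diag

variable [CompleteSpace V]

theorem hasDerivAt_smul_integral_lineMap {G : ℂ → V} {c : ℂ} {r : ℝ}
    (hG : DifferentiableOn ℂ G (Metric.ball c r)) {z w : ℂ} (hz : z ∈ Metric.ball c r)
    (hw : w ∈ Metric.ball c r) :
    HasDerivAt (fun w ↦ (w - z) • ∫ τ in (0 : ℝ)..1, G (AffineMap.lineMap z w τ)) (G w) w := by
  obtain ⟨F, hF⟩ := hG.isExactOn_ball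
  have hint (w : ℂ) (hw : w ∈ Metric.ball c r) :
      (w - z) • ∫ τ in (0 : ℝ)..1, G (AffineMap.lineMap z w τ) = F w - F z := by
    have hmem (τ : ℝ) (hτ : τ ∈ Set.Icc (0 : ℝ) 1) : z + τ • (w - z) ∈ Metric.ball c r := by
      have := (convex_ball c r).lineMap_mem hz hw hτ
      rwa [AffineMap.lineMap_apply_module', add_comm] at this
    have hcont : ContinuousOn (fun τ : ℝ ↦ G (z + τ • (w - z))) (Set.Icc 0 1) :=
      hG.continuousOn.comp (by fun_prop) hmem
    simpa [AffineMap.lineMap_apply_module', add_comm] using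
      intervalIntegral.integral_unitInterval_deriv_eq_sub hcont fun τ hτ ↦ hF _ (hmem τ hτ)
  refine ((hF w hw).sub_const (F z)).congr_of_eventuallyEq ?_
  filter_upwards [Metric.isOpen_ball.mem_nhds hw] with w' hw'
  exact hint w' hw'

theorem exists_isGoursatBall (β : V →L[ℂ] V →L[ℂ] V) (ha : AnalyticAt ℂ a x₀)
    (hb : AnalyticAt ℂ b x₀) {p : ℂ → Prop} (hp : ∀ᶠ z in 𝓝 x₀, p z) :
    ∃ r > 0, IsGoursatBall β a b x₀ r ∧ ∀ z ∈ Metric.ball x₀ r, p z := by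
  obtain ⟨P, Q, -, hsol⟩ := exists_analyticAt_isGoursatSol β ha hb
  have hanalytic := (analyticAt_goursatSol β ha hb).eventually_analyticAt
  have hanalytic_flip := (analyticAt_goursatSol β.flip hb ha).eventually_analyticAt
  obtain ⟨r, hr, hball⟩ := Metric.eventually_nhds_iff_ball.1
    (hsol.and (hanalytic.and (hanalytic_flip.and (continuousAt_fst.eventually hp))))
  have hmem {z w : ℂ} (hz : z ∈ Metric.ball x₀ r) (hw : w ∈ Metric.ball x₀ r) :
      (z, w) ∈ Metric.ball (x₀, x₀) r := by
    rw [← ball_prod_same]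
    exact ⟨hz, hw⟩
  exact ⟨r, hr, ⟨fun hz hw ↦ ⟨_, _, (hball _ (hmem hz hw)).1⟩,
    fun hz hw ↦ (hball _ (hmem hz hw)).2.1, fun hz hw ↦ (hball _ (hmem hz hw)).2.2.1⟩,
    fun _ hz ↦ (hball _ (hmem hz hz)).2.2.2⟩

namespace IsGoursatBall

variable {r : ℝ} {z w : ℂ}

theorem hasDerivAt (h : IsGoursatBall β a b x₀ r) (hz : z ∈ Metric.ball x₀ r)
    (hw : w ∈ Metric.ball x₀ r) :
    HasDerivAt (fun w ↦ goursatSol β a b (z, w))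
      (β (goursatSol β a b (z, w)) (goursatSol β.flip b a (w, z))) w := by
  have hG : DifferentiableOn ℂ
      (fun w ↦ β (goursatSol β a b (z, w)) (goursatSol β.flip b a (w, z)))
      (Metric.ball x₀ r) := fun w hw ↦ by
    have hp := (h.analyticAt hz hw).differentiableAt.comp w (f := fun w ↦ (z, w)) (by fun_prop)
    have hq := (h.analyticAt_flip hw hz).differentiableAt.comp w (f := fun w ↦ (w, z))
      (by fun_prop)
    exact ((β.differentiableAt.comp w hp).clm_apply hq).differentiableWithinAt
  refine ((hasDerivAt_smul_integral_lineMap hG hz hw).const_add (a z)).congr_of_eventuallyEq ?_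
  filter_upwards [Metric.isOpen_ball.mem_nhds hw] with w' hw'
  obtain ⟨_, _, hsol⟩ := h.exists_isGoursatSol hz hw'
  exact hsol.goursatSol_eq_add_integral

theorem apply_goursatSol_eq_zero {W : Type*} [NormedAddCommGroup W] [NormedSpace ℂ W]
    (h : IsGoursatBall β a b x₀ r) {Φ : V → W} (hΦ : Differentiable ℂ Φ)
    (hΦβ : ∀ X Y, fderiv ℂ Φ X (β X Y) = 0) (hΦa : ∀ z ∈ Metric.ball x₀ r, Φ (a z) = 0)
    (hz : z ∈ Metric.ball x₀ r) (hw : w ∈ Metric.ball x₀ r) :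
    Φ (goursatSol β a b (z, w)) = 0 := by
  have hderiv (w : ℂ) (hw : w ∈ Metric.ball x₀ r) :
      HasDerivAt (fun w ↦ Φ (goursatSol β a b (z, w))) 0 w := by
    have := (hΦ _).hasFDerivAt.comp_hasDerivAt w (h.hasDerivAt hz hw)
    rwa [hΦβ] at this
  calc Φ (goursatSol β a b (z, w)) = Φ (goursatSol β a b (z, z)) :=
        Metric.isOpen_ball.is_const_of_deriv_eq_zero (convex_ball x₀ r).isPreconnected
          (fun w hw ↦ (hderiv w hw).differentiableAt.differentiableWithinAt)
          (fun w hw ↦ (hderiv w hw).deriv) hw hz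
    _ = 0 := by rw [h.goursatSol_diag hz, hΦa z hz]

end IsGoursatBall

end GoursatDerivative

/-! ### Wirtinger derivatives and primitives -/

section Wirtinger

open scoped ComplexConjugate

variable {V : Type*} [NormedAddCommGroup V] [NormedSpace ℂ V]

/-- The differential `A dz + B dz̄` of a function with Wirtinger derivatives `A` and `B`, as a
continuous linear function of the pair `(A, B)`. -/
def wirtingerForm : V × V →L[ℝ] ℂ →L[ℝ] V :=
  (ContinuousLinearMap.lsmul ℝ ℂ).flip.coprod
    ((ContinuousLinearMap.lsmul ℝ ℂ).comp (Complex.conjCLE : ℂ →L[ℝ] ℂ)).flip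

@[simp]
theorem wirtingerForm_apply (X : V × V) (h : ℂ) :
    wirtingerForm X h = h • X.1 + conj h • X.2 := rfl

theorem hasFDerivAt_comp_conj_graph {g : ℂ × ℂ → V} {ζ : ℂ} {B : V}
    (hg : DifferentiableAt ℂ g (ζ, conj ζ)) (hB : HasDerivAt (fun w ↦ g (ζ, w)) B (conj ζ)) :
    ∃ A, HasFDerivAt (fun ζ ↦ g (ζ, conj ζ)) (wirtingerForm (A, B)) ζ := by
  have hgraph : HasFDerivAt (fun ζ : ℂ ↦ (ζ, conj ζ))
      ((ContinuousLinearMap.id ℝ ℂ).prod (Complex.conjCLE : ℂ →L[ℝ] ℂ)) ζ :=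
    ((ContinuousLinearMap.id ℝ ℂ).prod (Complex.conjCLE : ℂ →L[ℝ] ℂ)).hasFDerivAt
  have hB_eq : fderiv ℂ g (ζ, conj ζ) (0, 1) = B :=
    (hg.hasFDerivAt.comp_hasDerivAt (conj ζ)
      ((hasDerivAt_const (conj ζ) ζ).prodMk (hasDerivAt_id (conj ζ)))).unique hB
  refine ⟨fderiv ℂ g (ζ, conj ζ) (1, 0),
    ((hg.hasFDerivAt.restrictScalars ℝ).comp ζ hgraph).congr_fderiv ?_⟩
  ext h
  have hsplit : (h, conj h) = h • ((1, 0) : ℂ × ℂ) + conj h • ((0, 1) : ℂ × ℂ) := by simp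
  change fderiv ℂ g (ζ, conj ζ) (h, conj h) = _
  rw [hsplit, map_add, map_smul, map_smul, hB_eq, wirtingerForm_apply]

variable {P Q f : ℂ → V} {ζ : ℂ} {A B M : V}

theorem hasFDerivAt_wirtingerForm_comp (hP : HasFDerivAt P (wirtingerForm (A, M)) ζ)
    (hQ : HasFDerivAt Q (wirtingerForm (M, B)) ζ) :
    HasFDerivAt (fun ζ ↦ wirtingerForm (P ζ, Q ζ))
      (wirtingerForm.comp ((wirtingerForm (A, M)).prod (wirtingerForm (M, B)))) ζ :=
  (wirtingerForm (V := V)).hasFDerivAt.comp ζ (hP.prodMk hQ)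

theorem fderiv_wirtingerForm_comp_comm (hP : HasFDerivAt P (wirtingerForm (A, M)) ζ)
    (hQ : HasFDerivAt Q (wirtingerForm (M, B)) ζ) (h k : ℂ) :
    fderiv ℝ (fun ζ ↦ wirtingerForm (P ζ, Q ζ)) ζ h k =
      fderiv ℝ (fun ζ ↦ wirtingerForm (P ζ, Q ζ)) ζ k h := by
  rw [(hasFDerivAt_wirtingerForm_comp hP hQ).fderiv]
  simp only [ContinuousLinearMap.comp_apply, ContinuousLinearMap.prod_apply, wirtingerForm_apply]
  module

theorem fderiv_fderiv_apply_one_add_I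
    (hf : ∀ᶠ ζ in 𝓝 ζ, HasFDerivAt f (wirtingerForm (P ζ, Q ζ)) ζ)
    (hP : HasFDerivAt P (wirtingerForm (A, M)) ζ) (hQ : HasFDerivAt Q (wirtingerForm (M, B)) ζ) :
    fderiv ℝ (fun ζ ↦ fderiv ℝ f ζ 1) ζ 1 + fderiv ℝ (fun ζ ↦ fderiv ℝ f ζ I) ζ I =
      (4 : ℂ) • M := by
  have hsecond (h : ℂ) : fderiv ℝ (fun ζ ↦ fderiv ℝ f ζ h) ζ h =
      (h * h) • A + (2 * (h * conj h)) • M + (conj h * conj h) • B := by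
    have heq : (fun ζ ↦ fderiv ℝ f ζ h) =ᶠ[𝓝 ζ] fun ζ ↦ wirtingerForm (P ζ, Q ζ) h :=
      hf.mono fun ζ hζ ↦ by simp only [hζ.fderiv]
    have hderiv := (hasFDerivAt_wirtingerForm_comp hP hQ).clm_apply (hasFDerivAt_const h ζ)
    rw [heq.fderiv_eq, hderiv.fderiv]
    simp only [_root_.add_apply, ContinuousLinearMap.comp_apply,
      _root_.zero_apply, map_zero, zero_add, ContinuousLinearMap.flip_apply,
      ContinuousLinearMap.prod_apply, wirtingerForm_apply]
    module
  rw [hsecond, hsecond]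
  simp only [map_one, conj_I, mul_one, one_smul, mul_neg, I_mul_I, neg_mul]
  module

end Wirtinger

/-! ### Restriction to the real slice `w = z̄` -/

section RealSlice

open scoped ComplexConjugate ContDiff

variable {V : Type*} [NormedAddCommGroup V] [NormedSpace ℂ V]
variable {β : V →L[ℂ] V →L[ℂ] V} {θ : V →L[ℝ] V} {a : ℂ → V} {x₀ r : ℝ} {ζ : ℂ}

/-- The solution of `∂P/∂z̄ = β P (θ P)` with `P = a` on the real axis: the first component of
the Goursat system with diagonal data `a` and `θ ∘ a ∘ conj`, restricted to `w = z̄`. -/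
def sliceSol (β : V →L[ℂ] V →L[ℂ] V) (θ : V →L[ℝ] V) (a : ℂ → V) (ζ : ℂ) : V :=
  goursatSol β a (fun ζ ↦ θ (a (conj ζ))) (ζ, conj ζ)

theorem conj_mem_ball_ofReal (hζ : ζ ∈ Metric.ball (x₀ : ℂ) r) :
    conj ζ ∈ Metric.ball (x₀ : ℂ) r := by
  rw [Metric.mem_ball, dist_eq_norm] at hζ ⊢
  rwa [← Complex.conj_ofReal x₀, ← map_sub, RCLike.norm_conj]

theorem IsAntiConj.hasFDerivAt_comp (hθ : IsAntiConj β θ) {P : ℂ → V} {A M : V}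
    (hP : HasFDerivAt P (wirtingerForm (A, M)) ζ) :
    HasFDerivAt (fun ζ ↦ θ (P ζ)) (wirtingerForm (θ M, θ A)) ζ := by
  refine (θ.hasFDerivAt.comp ζ hP).congr_fderiv ?_
  ext h
  simp only [ContinuousLinearMap.comp_apply, wirtingerForm_apply, map_add, hθ.map_smul, conj_conj]
  exact add_comm _ _

theorem IsAntiConj.map_bilin_self (hθ : IsAntiConj β θ) (X : V) : θ (β X (θ X)) = β X (θ X) := by
  rw [hθ.map_bilin, hθ.involutive]

theorem IsGoursatBall.sliceSol_ofReal
    (h : IsGoursatBall β a (fun ζ ↦ θ (a (conj ζ))) x₀ r) {x : ℝ}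
    (hx : (x : ℂ) ∈ Metric.ball (x₀ : ℂ) r) :
    sliceSol β θ a x = a x := by
  rw [sliceSol, conj_ofReal, h.goursatSol_diag hx]

variable [CompleteSpace V]

theorem IsAntiConj.analyticAt_comp_conj (hθ : IsAntiConj β θ) (ha : AnalyticAt ℂ a x₀) :
    AnalyticAt ℂ (fun ζ ↦ θ (a (conj ζ))) x₀ := by
  rw [Complex.analyticAt_iff_eventually_differentiableAt] at ha ⊢
  have hconj : Tendsto (fun ζ : ℂ ↦ conj ζ) (𝓝 (x₀ : ℂ)) (𝓝 (x₀ : ℂ)) := by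
    simpa using Complex.continuous_conj.tendsto (x₀ : ℂ)
  filter_upwards [hconj.eventually ha] with ζ hζ
  have hreal : HasFDerivAt (fun ζ ↦ θ (a (conj ζ)))
      (θ.comp (((fderiv ℂ a (conj ζ)).restrictScalars ℝ).comp (Complex.conjCLE : ℂ →L[ℝ] ℂ))) ζ :=
    θ.hasFDerivAt.comp ζ ((hζ.hasFDerivAt.restrictScalars ℝ).comp ζ
      (Complex.conjCLE : ℂ →L[ℝ] ℂ).hasFDerivAt)
  have hlin : (ContinuousLinearMap.toSpanSingleton ℂ (θ (deriv a (conj ζ)))).restrictScalars ℝ =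
      θ.comp (((fderiv ℂ a (conj ζ)).restrictScalars ℝ).comp
        (Complex.conjCLE : ℂ →L[ℝ] ℂ)) := by
    ext h
    simp [hθ.map_smul]
  exact (hasFDerivAt_of_restrictScalars ℝ hreal hlin).differentiableAt

namespace IsGoursatBall

theorem contDiffAt_sliceSol (h : IsGoursatBall β a (fun ζ ↦ θ (a (conj ζ))) x₀ r)
    (hζ : ζ ∈ Metric.ball (x₀ : ℂ) r) :
    ContDiffAt ℝ ∞ (sliceSol β θ a) ζ :=
  (((h.analyticAt hζ (conj_mem_ball_ofReal hζ)).contDiffAt).restrict_scalars ℝ).comp ζ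
    (contDiffAt_id.prodMk Complex.conjCLE.contDiff.contDiffAt)

theorem hasFDerivAt_sliceSol (h : IsGoursatBall β a (fun ζ ↦ θ (a (conj ζ))) x₀ r)
    (hθ : IsAntiConj β θ) (hζ : ζ ∈ Metric.ball (x₀ : ℂ) r) :
    ∃ A, HasFDerivAt (sliceSol β θ a)
      (wirtingerForm (A, β (sliceSol β θ a ζ) (θ (sliceSol β θ a ζ)))) ζ := by
  have hζc := conj_mem_ball_ofReal hζ
  obtain ⟨_, _, hsol⟩ := h.exists_isGoursatSol hζ hζc
  have hderiv := h.hasDerivAt hζ hζc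
  have hflip := hθ.goursatSol_flip_conj hsol
  rw [conj_conj] at hflip
  rw [hflip] at hderiv
  exact hasFDerivAt_comp_conj_graph (h.analyticAt hζ hζc).differentiableAt hderiv

end IsGoursatBall

end RealSlice

section Primitive

variable {V : Type*} [NormedAddCommGroup V] [NormedSpace ℝ V]

/-- The integral of the `1`-form `ω` along vertical segments, with values `f₀` on the real axis. -/
def verticalPrimitive (ω : ℂ → ℂ →L[ℝ] V) (f₀ : ℝ → V) (ζ : ℂ) : V :=
  f₀ ζ.re + ∫ τ in (0 : ℝ)..1, ω (AffineMap.lineMap (ζ.re : ℂ) ζ τ) (ζ - ζ.re)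

@[simp]
theorem verticalPrimitive_ofReal (ω : ℂ → ℂ →L[ℝ] V) (f₀ : ℝ → V) (x : ℝ) :
    verticalPrimitive ω f₀ x = f₀ x := by
  simp [verticalPrimitive]

theorem integral_lineMap_eq_sub [CompleteSpace V] {E : Type*} [NormedAddCommGroup E]
    [NormedSpace ℝ E] {ω : E → E →L[ℝ] V} {F : E → V} {s : Set E} (hs : Convex ℝ s)
    (hω : ContinuousOn ω s) (hF : ∀ z ∈ s, HasFDerivAt F (ω z) z) {z w : E} (hz : z ∈ s)
    (hw : w ∈ s) : ∫ τ in (0 : ℝ)..1, ω (AffineMap.lineMap z w τ) (w - z) = F w - F z := by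
  have hmem (τ : ℝ) (hτ : τ ∈ Set.uIcc (0 : ℝ) 1) : AffineMap.lineMap z w τ ∈ s :=
    hs.lineMap_mem hz hw (by rwa [Set.uIcc_of_le zero_le_one] at hτ)
  have hcont : ContinuousOn (fun τ : ℝ ↦ ω (AffineMap.lineMap z w τ) (w - z))
      (Set.uIcc (0 : ℝ) 1) :=
    (hω.comp (AffineMap.lineMap_continuous (R := ℝ)).continuousOn hmem).clm_apply continuousOn_const
  simpa using intervalIntegral.integral_eq_sub_of_hasDerivAt
    (fun τ hτ ↦ (hF _ (hmem τ hτ)).comp_hasDerivAt τ AffineMap.hasDerivAt_lineMap)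
    hcont.intervalIntegrable

theorem hasFDerivAt_verticalPrimitive [CompleteSpace V] {ω : ℂ → ℂ →L[ℝ] V} {f₀ : ℝ → V}
    {x₀ r : ℝ} (hω : DifferentiableOn ℝ ω (Metric.ball (x₀ : ℂ) r))
    (hclosed : ∀ ζ ∈ Metric.ball (x₀ : ℂ) r, ∀ h k, fderiv ℝ ω ζ h k = fderiv ℝ ω ζ k h)
    (hf₀ : ∀ x : ℝ, (x : ℂ) ∈ Metric.ball (x₀ : ℂ) r → HasDerivAt f₀ (ω x 1) x)
    {ζ : ℂ} (hζ : ζ ∈ Metric.ball (x₀ : ℂ) r) :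
    HasFDerivAt (verticalPrimitive ω f₀) (ω ζ) ζ := by
  obtain ⟨F, hF⟩ := (convex_ball (x₀ : ℂ) r).exists_forall_hasFDerivAt_of_fderiv_symmetric
    Metric.isOpen_ball hω hclosed
  have hopen : IsOpen (ofReal ⁻¹' Metric.ball (x₀ : ℂ) r) :=
    Metric.isOpen_ball.preimage continuous_ofReal
  have hconv : Convex ℝ (ofReal ⁻¹' Metric.ball (x₀ : ℂ) r) :=
    (convex_ball (x₀ : ℂ) r).linear_preimage ofRealCLM.toLinearMap
  have hderiv {x : ℝ} (hx : (x : ℂ) ∈ Metric.ball (x₀ : ℂ) r) :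
      HasDerivAt (fun x : ℝ ↦ F x - f₀ x) 0 x := by
    have := ((hF x hx).comp_hasDerivAt x ofRealCLM.hasDerivAt).sub (hf₀ x hx)
    rwa [ofRealCLM_apply, ofReal_one, sub_self] at this
  have heq {ζ : ℂ} (hζ : ζ ∈ Metric.ball (x₀ : ℂ) r) :
      verticalPrimitive ω f₀ ζ = F ζ - (F x₀ - f₀ x₀) := by
    have hre := re_mem_ball_ofReal hζ
    have hx₀ : (x₀ : ℂ) ∈ Metric.ball (x₀ : ℂ) r :=
      Metric.mem_ball_self (Metric.nonempty_ball.1 ⟨ζ, hζ⟩)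
    have hdiff : F ζ.re - f₀ ζ.re = F x₀ - f₀ x₀ :=
      hopen.is_const_of_deriv_eq_zero (f := fun x : ℝ ↦ F x - f₀ x) hconv.isPreconnected
        (fun x hx ↦ (hderiv hx).differentiableAt.differentiableWithinAt)
        (fun x hx ↦ (hderiv hx).deriv) hre hx₀
    rw [verticalPrimitive, integral_lineMap_eq_sub (convex_ball _ r) hω.continuousOn hF hre hζ,
      ← hdiff]
    abel
  refine ((hF ζ hζ).sub_const (F x₀ - f₀ x₀)).congr_of_eventuallyEq ?_
  filter_upwards [Metric.isOpen_ball.mem_nhds hζ] with ζ' hζ'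
  exact heq hζ'

end Primitive

section Surface

open scoped ComplexConjugate ContDiff

variable {V : Type*} [NormedAddCommGroup V] [NormedSpace ℂ V]
variable {β : V →L[ℂ] V →L[ℂ] V} {θ : V →L[ℝ] V} {a : ℂ → V} {f₀ : ℝ → V} {x₀ r : ℝ} {ζ : ℂ}

/-- The solution of the Cauchy problem `∂²f/∂z∂z̄ = β (∂f/∂z) (∂f/∂z̄)` with `f = f₀` and
`∂f/∂z = a` on the real axis, where `θ` exchanges the two first derivatives of `f`. -/
def sliceSurface (β : V →L[ℂ] V →L[ℂ] V) (θ : V →L[ℝ] V) (a : ℂ → V) (f₀ : ℝ → V) : ℂ → V :=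
  verticalPrimitive (fun ζ ↦ wirtingerForm (sliceSol β θ a ζ, θ (sliceSol β θ a ζ))) f₀

@[simp]
theorem sliceSurface_ofReal (x : ℝ) : sliceSurface β θ a f₀ x = f₀ x :=
  verticalPrimitive_ofReal _ _ x

theorem eventually_nhds_ofReal_re {p : ℝ → Prop} (hp : ∀ᶠ x in 𝓝 x₀, p x) :
    ∀ᶠ ζ in 𝓝 (x₀ : ℂ), p ζ.re :=
  continuous_re.continuousAt.eventually (by rwa [ofReal_re])

variable [CompleteSpace V]

theorem IsGoursatBall.hasFDerivAt_sliceSurface (hθ : IsAntiConj β θ)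
    (h : IsGoursatBall β a (fun ζ ↦ θ (a (conj ζ))) x₀ r)
    (hf₀ : ∀ ζ ∈ Metric.ball (x₀ : ℂ) r, HasDerivAt f₀ (a ζ.re + θ (a ζ.re)) ζ.re)
    (hζ : ζ ∈ Metric.ball (x₀ : ℂ) r) :
    HasFDerivAt (sliceSurface β θ a f₀)
      (wirtingerForm (sliceSol β θ a ζ, θ (sliceSol β θ a ζ))) ζ := by
  have hderiv {ζ : ℂ} (hζ : ζ ∈ Metric.ball (x₀ : ℂ) r) :
      ∃ A M B, HasFDerivAt (sliceSol β θ a) (wirtingerForm (A, M)) ζ ∧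
        HasFDerivAt (fun ζ ↦ θ (sliceSol β θ a ζ)) (wirtingerForm (M, B)) ζ := by
    obtain ⟨A, hA⟩ := h.hasFDerivAt_sliceSol hθ hζ
    refine ⟨A, _, θ A, hA, ?_⟩
    simpa only [hθ.map_bilin_self] using hθ.hasFDerivAt_comp hA
  refine hasFDerivAt_verticalPrimitive (fun ζ hζ ↦ ?_) (fun ζ hζ ↦ ?_) (fun x hx ↦ ?_) hζ
  · obtain ⟨A, M, B, hP, hQ⟩ := hderiv hζ
    exact (hasFDerivAt_wirtingerForm_comp hP hQ).differentiableAt.differentiableWithinAt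
  · obtain ⟨A, M, B, hP, hQ⟩ := hderiv hζ
    exact fderiv_wirtingerForm_comp_comm hP hQ
  · simpa [h.sliceSol_ofReal hx] using hf₀ x hx

theorem exists_isGoursatBall_conj (hθ : IsAntiConj β θ) (ha : AnalyticAt ℂ a x₀) {p : ℂ → Prop}
    (hp : ∀ᶠ ζ in 𝓝 (x₀ : ℂ), p ζ) :
    ∃ r > 0, IsGoursatBall β a (fun ζ ↦ θ (a (conj ζ))) x₀ r ∧
      ∀ ζ ∈ Metric.ball (x₀ : ℂ) r, p ζ :=
  exists_isGoursatBall β ha (hθ.analyticAt_comp_conj ha) hp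

theorem sliceSol_ofReal (hθ : IsAntiConj β θ) (ha : AnalyticAt ℂ a x₀) :
    sliceSol β θ a x₀ = a x₀ :=
  have ⟨_, hr, hball, _⟩ := exists_isGoursatBall_conj hθ ha (Eventually.of_forall fun _ ↦ trivial)
  hball.sliceSol_ofReal (Metric.mem_ball_self hr)

theorem eventually_contDiffAt_sliceSol (hθ : IsAntiConj β θ) (ha : AnalyticAt ℂ a x₀) :
    ∀ᶠ ζ in 𝓝 (x₀ : ℂ), ContDiffAt ℝ ∞ (sliceSol β θ a) ζ := by
  obtain ⟨r, hr, hball, -⟩ :=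
    exists_isGoursatBall_conj hθ ha (Eventually.of_forall fun _ ↦ trivial)
  filter_upwards [Metric.ball_mem_nhds _ hr] with ζ hζ using hball.contDiffAt_sliceSol hζ

theorem eventually_hasFDerivAt_sliceSol (hθ : IsAntiConj β θ) (ha : AnalyticAt ℂ a x₀) :
    ∀ᶠ ζ in 𝓝 (x₀ : ℂ), ∃ A, HasFDerivAt (sliceSol β θ a)
      (wirtingerForm (A, β (sliceSol β θ a ζ) (θ (sliceSol β θ a ζ)))) ζ := by
  obtain ⟨r, hr, hball, -⟩ :=
    exists_isGoursatBall_conj hθ ha (Eventually.of_forall fun _ ↦ trivial)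
  filter_upwards [Metric.ball_mem_nhds _ hr] with ζ hζ using hball.hasFDerivAt_sliceSol hθ hζ

theorem eventually_apply_sliceSol_eq_zero {W : Type*} [NormedAddCommGroup W] [NormedSpace ℂ W]
    (hθ : IsAntiConj β θ) (ha : AnalyticAt ℂ a x₀) {Φ : V → W}
    (hΦ : AnalyticOnNhd ℂ Φ Set.univ)
    (hΦβ : ∀ X Y, fderiv ℂ Φ X (β X Y) = 0) (hΦa : ∀ᶠ x : ℝ in 𝓝 x₀, Φ (a x) = 0) :
    ∀ᶠ ζ in 𝓝 (x₀ : ℂ), Φ (sliceSol β θ a ζ) = 0 := by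
  have hΦa' : ∀ᶠ ζ in 𝓝 (x₀ : ℂ), Φ (a ζ) = 0 :=
    eventually_eq_of_eventually_eq_ofReal ((hΦ _ trivial).fun_comp ha) analyticAt_const hΦa
  have hΦ' : Differentiable ℂ Φ := fun X ↦ (hΦ X trivial).differentiableAt
  obtain ⟨r, hr, hball, hzero⟩ := exists_isGoursatBall_conj hθ ha hΦa'
  filter_upwards [Metric.ball_mem_nhds _ hr] with ζ hζ
  exact hball.apply_goursatSol_eq_zero hΦ' hΦβ hzero hζ (conj_mem_ball_ofReal hζ)

theorem eventually_hasFDerivAt_sliceSurface (hθ : IsAntiConj β θ) (ha : AnalyticAt ℂ a x₀)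
    (hf₀ : ∀ᶠ x : ℝ in 𝓝 x₀, HasDerivAt f₀ (a x + θ (a x)) x) :
    ∀ᶠ ζ in 𝓝 (x₀ : ℂ), HasFDerivAt (sliceSurface β θ a f₀)
      (wirtingerForm (sliceSol β θ a ζ, θ (sliceSol β θ a ζ))) ζ := by
  obtain ⟨r, hr, hball, hf₀'⟩ := exists_isGoursatBall_conj hθ ha (eventually_nhds_ofReal_re hf₀)
  filter_upwards [Metric.ball_mem_nhds _ hr] with ζ hζ
  exact hball.hasFDerivAt_sliceSurface hθ hf₀' hζ

theorem eventually_laplacian_sliceSurface (hθ : IsAntiConj β θ) (ha : AnalyticAt ℂ a x₀)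
    (hf₀ : ∀ᶠ x : ℝ in 𝓝 x₀, HasDerivAt f₀ (a x + θ (a x)) x) :
    ∀ᶠ ζ in 𝓝 (x₀ : ℂ),
      fderiv ℝ (fun ζ ↦ fderiv ℝ (sliceSurface β θ a f₀) ζ 1) ζ 1 +
          fderiv ℝ (fun ζ ↦ fderiv ℝ (sliceSurface β θ a f₀) ζ I) ζ I =
        (4 : ℂ) • β (sliceSol β θ a ζ) (θ (sliceSol β θ a ζ)) := by
  filter_upwards [(eventually_hasFDerivAt_sliceSurface hθ ha hf₀).eventually_nhds,
    eventually_hasFDerivAt_sliceSol hθ ha] with ζ hf ⟨A, hA⟩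
  refine fderiv_fderiv_apply_one_add_I hf hA (B := θ A) ?_
  simpa only [hθ.map_bilin_self] using hθ.hasFDerivAt_comp hA

theorem eventually_contDiffAt_sliceSurface (hθ : IsAntiConj β θ) (ha : AnalyticAt ℂ a x₀)
    (hf₀ : ∀ᶠ x : ℝ in 𝓝 x₀, HasDerivAt f₀ (a x + θ (a x)) x) :
    ∀ᶠ ζ in 𝓝 (x₀ : ℂ), ContDiffAt ℝ ∞ (sliceSurface β θ a f₀) ζ := by
  obtain ⟨s, hs, hs_open, hx₀⟩ := eventually_nhds_iff.1
    ((eventually_hasFDerivAt_sliceSurface hθ ha hf₀).and (eventually_contDiffAt_sliceSol hθ ha))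
  have hsmooth : ContDiffOn ℝ ∞ (sliceSurface β θ a f₀) s := by
    refine (contDiffOn_infty_iff_fderiv_of_isOpen hs_open).2
      ⟨fun ζ hζ ↦ (hs ζ hζ).1.differentiableAt.differentiableWithinAt, ?_⟩
    refine ContDiffOn.congr (fun ζ hζ ↦ ?_) fun ζ hζ ↦ (hs ζ hζ).1.fderiv
    exact (wirtingerForm.contDiff.contDiffAt.comp ζ ((hs ζ hζ).2.prodMk
      (θ.contDiff.contDiffAt.comp ζ (hs ζ hζ).2))).contDiffWithinAt
  filter_upwards [hs_open.mem_nhds hx₀] with ζ hζ using hsmooth.contDiffAt (hs_open.mem_nhds hζ)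

end Surface

section LocallyConstant

theorem eventually_map_eq_zero {E V W : Type*} [NormedAddCommGroup E] [NormedSpace ℝ E]
    [NormedAddCommGroup V] [NormedSpace ℝ V] [NormedAddCommGroup W] [NormedSpace ℝ W]
    (K : V →L[ℝ] W) {f : E → V} {x₀ : E} (hf : ∀ᶠ x in 𝓝 x₀, DifferentiableAt ℝ f x)
    (hK : ∀ᶠ x in 𝓝 x₀, ∀ h, K (fderiv ℝ f x h) = 0) (hKx₀ : K (f x₀) = 0) :
    ∀ᶠ x in 𝓝 x₀, K (f x) = 0 := by
  obtain ⟨r, hr, hball⟩ := Metric.eventually_nhds_iff_ball.1 (hf.and hK)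
  have hderiv {x : E} (hx : x ∈ Metric.ball x₀ r) : HasFDerivAt (fun x ↦ K (f x)) 0 x :=
    (K.hasFDerivAt.comp x (hball x hx).1.hasFDerivAt).congr_fderiv
      (ContinuousLinearMap.ext (hball x hx).2)
  filter_upwards [Metric.ball_mem_nhds _ hr] with x hx
  rw [← hKx₀]
  exact Metric.isOpen_ball.is_const_of_fderiv_eq_zero (𝕜 := ℝ) (f := fun x ↦ K (f x))
    (convex_ball _ r).isPreconnected
    (fun x hx ↦ (hderiv hx).differentiableAt.differentiableWithinAt)
    (fun x hx ↦ (hderiv hx).fderiv) hx (Metric.mem_ball_self hr)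

end LocallyConstant

/-! ### Neighbourhoods of an interval in the plane -/

section VerticalNhd

/-- An open subset of the plane which meets the real axis in `J` and contains, with each point,
the vertical segment joining it to the real axis. -/
structure IsVerticalNhd (J : Set ℝ) (S : Set ℂ) : Prop where
  isOpen : IsOpen S
  ofReal_mem {x : ℝ} (hx : x ∈ J) : (x : ℂ) ∈ S
  re_mem {ζ : ℂ} (hζ : ζ ∈ S) : ζ.re ∈ J
  lineMap_mem {ζ : ℂ} (hζ : ζ ∈ S) {τ : ℝ} (hτ : τ ∈ Set.Icc (0 : ℝ) 1) :
    AffineMap.lineMap (ζ.re : ℂ) ζ τ ∈ S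

theorem exists_isVerticalNhd {J : Set ℝ} (hJ : IsOpen J) {p : ℂ → Prop}
    (hp : ∀ x ∈ J, ∀ᶠ ζ in 𝓝 (x : ℂ), p ζ) : ∃ S, IsVerticalNhd J S ∧ ∀ ζ ∈ S, p ζ := by
  have hball (x : ℝ) (hx : x ∈ J) : ∃ r > 0, ∀ ζ ∈ Metric.ball (x : ℂ) r, ζ.re ∈ J ∧ p ζ :=
    Metric.eventually_nhds_iff_ball.1
      ((eventually_nhds_ofReal_re (hJ.mem_nhds hx)).and (hp x hx))
  choose! r hr hball using hball
  refine ⟨⋃ x ∈ J, Metric.ball (x : ℂ) (r x), ⟨isOpen_biUnion fun _ _ ↦ Metric.isOpen_ball,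
    fun {x} hx ↦ Set.mem_biUnion hx (Metric.mem_ball_self (hr x hx)), fun hζ ↦ ?_,
    fun hζ τ hτ ↦ ?_⟩, fun ζ hζ ↦ ?_⟩
  all_goals obtain ⟨x, hx, hζ⟩ := Set.mem_iUnion₂.1 hζ
  · exact (hball x hx _ hζ).1
  · exact Set.mem_biUnion hx ((convex_ball _ _).lineMap_mem (re_mem_ball_ofReal hζ) hζ hτ)
  · exact (hball x hx ζ hζ).2

theorem IsVerticalNhd.contractibleSpace {J : Set ℝ} {S : Set ℂ} (h : IsVerticalNhd J S)
    (hJ : J.OrdConnected) (hne : S.Nonempty) : ContractibleSpace S := by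
  have : ContractibleSpace J := hJ.convex.contractibleSpace (hne.image _ |>.mono
    (Set.image_subset_iff.2 fun _ ↦ h.re_mem))
  let toAxis : C(S, J) := ⟨fun ζ ↦ ⟨ζ.1.re, h.re_mem ζ.2⟩, by fun_prop⟩
  let ofAxis : C(J, S) := ⟨fun x ↦ ⟨x.1, h.ofReal_mem x.2⟩, by fun_prop⟩
  let retraction : (ofAxis.comp toAxis).Homotopy (ContinuousMap.id S) :=
    { toFun := fun q ↦ ⟨AffineMap.lineMap (q.2.1.re : ℂ) q.2.1 (q.1 : ℝ),
        h.lineMap_mem q.2.2 q.1.2⟩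
      continuous_toFun := by
        simp only [AffineMap.lineMap_apply_module]
        fun_prop
      map_zero_left := fun ζ ↦ Subtype.ext (by simp [ofAxis, toAxis])
      map_one_left := fun ζ ↦ Subtype.ext (by simp) }
  exact ContinuousMap.HomotopyEquiv.contractibleSpace
    ⟨toAxis, ofAxis, ⟨retraction⟩, by rfl⟩

end VerticalNhd

/-! ### Spin frames of orthonormal pairs -/

section QuaternionPair

variable {A : Type*} [Ring A] {x y i j q : A}

/-- A pair of anticommuting square roots of `-1`; in the quaternions and in `su(2)` these are the
orthonormal pairs of imaginary elements. -/
structure IsQuaternionPair (x y : A) : Prop where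
  left_mul_left : x * x = -1
  right_mul_right : y * y = -1
  right_mul_left : y * x = -(x * y)

/-- The sum of `-e * q * e'` over the products `e` of `x, y` and the corresponding products `e'`
of `i, j`: a multiple of the projection onto the elements intertwining the two pairs. -/
def intertwinerSum (x y i j q : A) : A :=
  q - x * q * i - y * q * j - x * y * q * (i * j)

namespace IsQuaternionPair

theorem left_mul_left_mul (h : IsQuaternionPair x y) (q : A) : x * (x * q) = -q := by
  rw [← mul_assoc, h.left_mul_left, neg_one_mul]

theorem right_mul_right_mul (h : IsQuaternionPair x y) (q : A) : y * (y * q) = -q := by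
  rw [← mul_assoc, h.right_mul_right, neg_one_mul]

theorem right_mul_left_mul (h : IsQuaternionPair x y) (q : A) :
    y * (x * q) = -(x * (y * q)) := by
  rw [← mul_assoc, h.right_mul_left, neg_mul, mul_assoc]

theorem of_map {B : Type*} [Ring B] {φ : A →+* B} (hφ : Function.Injective φ)
    (h : IsQuaternionPair (φ x) (φ y)) : IsQuaternionPair x y where
  left_mul_left := hφ (by simpa using h.left_mul_left)
  right_mul_right := hφ (by simpa using h.right_mul_right)
  right_mul_left := hφ (by simpa using h.right_mul_left)

theorem left_mul_intertwinerSum (h : IsQuaternionPair x y) (h' : IsQuaternionPair i j) (q : A) :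
    x * intertwinerSum x y i j q = intertwinerSum x y i j q * i := by
  simp only [intertwinerSum, mul_sub, sub_mul, mul_assoc, h.left_mul_left_mul, h'.left_mul_left,
    h'.left_mul_left_mul, h'.right_mul_left, mul_neg, mul_one, neg_neg]
  abel

theorem right_mul_intertwinerSum (h : IsQuaternionPair x y) (h' : IsQuaternionPair i j) (q : A) :
    y * intertwinerSum x y i j q = intertwinerSum x y i j q * j := by
  simp only [intertwinerSum, mul_sub, sub_mul, mul_assoc, h.right_mul_right_mul,
    h.right_mul_left_mul, h'.right_mul_right, mul_neg, mul_one, neg_neg]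
  abel

theorem exists_intertwinerSum_ne_zero (h : IsQuaternionPair i j) (h4 : (4 : A) ≠ 0) (x y : A) :
    ∃ q, intertwinerSum x y i j q ≠ 0 := by
  by_contra! hzero
  refine h4 ?_
  calc (4 : A) = intertwinerSum x y i j 1 - intertwinerSum x y i j i * i
        - intertwinerSum x y i j j * j - intertwinerSum x y i j (i * j) * (i * j) := by
        simp only [intertwinerSum, sub_mul, mul_assoc, h.left_mul_left, h.right_mul_right,
          h.left_mul_left_mul, h.right_mul_left, h.right_mul_left_mul,
          mul_neg, neg_mul, mul_one, neg_neg]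
        rw [show (4 : A) = 1 + 1 + 1 + 1 by norm_num]
        abel
    _ = 0 := by simp only [hzero, zero_mul, sub_zero]

end IsQuaternionPair

theorem intertwinerSum_mul_of_intertwines (hx : x * q = q * i) (hy : y * q = q * j) (p : A) :
    intertwinerSum x y i j (q * p) = q * intertwinerSum i j i j p := by
  have hxq (p : A) : x * (q * p) = q * (i * p) := by rw [← mul_assoc, hx, mul_assoc]
  have hyq (p : A) : y * (q * p) = q * (j * p) := by rw [← mul_assoc, hy, mul_assoc]
  simp only [intertwinerSum, mul_sub, mul_assoc, hxq, hyq]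

end QuaternionPair

section UnitFrame

open scoped Quaternion ContDiff

/-- The quaternion unit `i`. -/
@[simps]
def quatI : ℍ[ℝ] := ⟨0, 1, 0, 0⟩

/-- The quaternion unit `j`. -/
@[simps]
def quatJ : ℍ[ℝ] := ⟨0, 0, 1, 0⟩

theorem isQuaternionPair_quatI_quatJ : IsQuaternionPair quatI quatJ := by
  constructor <;> ext <;> simp

theorem intertwinerSum_quatI_quatJ (q : ℍ[ℝ]) :
    intertwinerSum quatI quatJ quatI quatJ q = (4 * q.re : ℝ) := by
  ext <;> simp [intertwinerSum]
  ring

/-- A unit quaternion `q` whose rotation `p ↦ q p q⁻¹` carries `i, j` to `x, y`. -/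
structure IsUnitFrame (x y q : ℍ[ℝ]) : Prop where
  norm_eq_one : ‖q‖ = 1
  left_mul : x * q = q * quatI
  right_mul : y * q = q * quatJ

/-- The normalized projection of `q` onto the frames of the pair `x, y`. -/
def frameNear (x y q : ℍ[ℝ]) : ℍ[ℝ] :=
  NormedSpace.normalize (intertwinerSum x y quatI quatJ q)

namespace IsUnitFrame

variable {x y q p : ℍ[ℝ]}

theorem neg (h : IsUnitFrame x y q) : IsUnitFrame x y (-q) :=
  ⟨by rw [norm_neg, h.norm_eq_one], by rw [mul_neg, h.left_mul, neg_mul],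
    by rw [mul_neg, h.right_mul, neg_mul]⟩

theorem ne_zero (h : IsUnitFrame x y q) : q ≠ 0 :=
  norm_ne_zero_iff.1 (h.norm_eq_one ▸ one_ne_zero)

theorem intertwinerSum_eq (h : IsUnitFrame x y q) (p : ℍ[ℝ]) :
    intertwinerSum x y quatI quatJ p = (4 * (q⁻¹ * p).re) • q := by
  rw [← mul_inv_cancel_left₀ h.ne_zero p, intertwinerSum_mul_of_intertwines h.left_mul h.right_mul,
    intertwinerSum_quatI_quatJ, Quaternion.mul_coe_eq_smul, mul_inv_cancel_left₀ h.ne_zero]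

theorem intertwinerSum_self (h : IsUnitFrame x y q) :
    intertwinerSum x y quatI quatJ q = (4 : ℝ) • q := by
  rw [h.intertwinerSum_eq, inv_mul_cancel₀ h.ne_zero, Quaternion.re_one, mul_one]

theorem eq_or_eq_neg (h : IsUnitFrame x y q) (h' : IsUnitFrame x y p) : p = q ∨ p = -q := by
  have hp : p = (q⁻¹ * p).re • q := by
    refine smul_right_injective ℍ[ℝ] (four_ne_zero (α := ℝ)) ?_
    simpa only [smul_smul, h'.intertwinerSum_self] using h.intertwinerSum_eq p
  have hre : |(q⁻¹ * p).re| = 1 := by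
    simpa [norm_smul, h.norm_eq_one, h'.norm_eq_one] using (congrArg norm hp).symm
  rcases eq_or_eq_neg_of_abs_eq hre with hre | hre
  · exact .inl (by rw [hp, hre, one_smul])
  · exact .inr (by rw [hp, hre, neg_one_smul])

theorem frameNear_self (h : IsUnitFrame x y q) : frameNear x y q = q := by
  rw [frameNear, h.intertwinerSum_self, NormedSpace.normalize_smul_of_pos four_pos,
    NormedSpace.normalize_eq_self_of_norm_eq_one h.norm_eq_one]

theorem intertwinerSum_ne_zero (h : IsUnitFrame x y q) :
    intertwinerSum x y quatI quatJ q ≠ 0 := by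
  rw [h.intertwinerSum_self]
  exact smul_ne_zero four_ne_zero h.ne_zero

end IsUnitFrame

variable {x y q : ℍ[ℝ]}

theorem isUnitFrame_frameNear (h : IsQuaternionPair x y)
    (hq : intertwinerSum x y quatI quatJ q ≠ 0) : IsUnitFrame x y (frameNear x y q) where
  norm_eq_one := NormedSpace.norm_normalize hq
  left_mul := by
    rw [frameNear, NormedSpace.normalize, mul_smul_comm, smul_mul_assoc,
      h.left_mul_intertwinerSum isQuaternionPair_quatI_quatJ]
  right_mul := by
    rw [frameNear, NormedSpace.normalize, mul_smul_comm, smul_mul_assoc,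
      h.right_mul_intertwinerSum isQuaternionPair_quatI_quatJ]

theorem exists_isUnitFrame (h : IsQuaternionPair x y) : ∃ q, IsUnitFrame x y q :=
  have h4 : (4 : ℍ[ℝ]) ≠ 0 := by exact_mod_cast Quaternion.coe_injective.ne (four_ne_zero (α := ℝ))
  have ⟨_, hq⟩ := isQuaternionPair_quatI_quatJ.exists_intertwinerSum_ne_zero h4 x y
  ⟨_, isUnitFrame_frameNear h hq⟩

section Continuity

variable {T : Type*} [TopologicalSpace T] {x y : T → ℍ[ℝ]} {t₀ : T}

theorem continuousAt_intertwinerSum (hx : ContinuousAt x t₀) (hy : ContinuousAt y t₀) :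
    ContinuousAt (fun t ↦ intertwinerSum (x t) (y t) quatI quatJ q) t₀ := by
  unfold intertwinerSum
  fun_prop

theorem continuousAt_frameNear (hx : ContinuousAt x t₀) (hy : ContinuousAt y t₀)
    (hq : IsUnitFrame (x t₀) (y t₀) q) :
    ContinuousAt (fun t ↦ frameNear (x t) (y t) q) t₀ :=
  have hsum := continuousAt_intertwinerSum (q := q) hx hy
  (hsum.norm.inv₀ (norm_ne_zero_iff.2 hq.intertwinerSum_ne_zero)).smul hsum

theorem eventually_isUnitFrame_frameNear (hx : ContinuousAt x t₀) (hy : ContinuousAt y t₀)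
    (hq : IsUnitFrame (x t₀) (y t₀) q) (hpair : ∀ᶠ t in 𝓝 t₀, IsQuaternionPair (x t) (y t)) :
    ∀ᶠ t in 𝓝 t₀, IsUnitFrame (x t) (y t) (frameNear (x t) (y t) q) := by
  filter_upwards [hpair,
    (continuousAt_intertwinerSum hx hy).eventually_ne hq.intertwinerSum_ne_zero] with t ht hne
  exact isUnitFrame_frameNear ht hne

-- Frames are unique up to sign, and by continuity the sign is `+` near `t₀`.
theorem eventuallyEq_frameNear {F : T → ℍ[ℝ]} (hx : ContinuousAt x t₀) (hy : ContinuousAt y t₀)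
    (hF : ContinuousAt F t₀) (hpair : ∀ᶠ t in 𝓝 t₀, IsQuaternionPair (x t) (y t))
    (hframe : ∀ᶠ t in 𝓝 t₀, IsUnitFrame (x t) (y t) (F t)) :
    F =ᶠ[𝓝 t₀] fun t ↦ frameNear (x t) (y t) (F t₀) := by
  have hF₀ := hframe.self_of_nhds
  have hne : ∀ᶠ t in 𝓝 t₀, F t + frameNear (x t) (y t) (F t₀) ≠ 0 := by
    refine (hF.add (continuousAt_frameNear hx hy hF₀)).eventually_ne ?_
    rw [Pi.add_apply, hF₀.frameNear_self, ← two_smul ℝ]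
    exact smul_ne_zero two_ne_zero hF₀.ne_zero
  filter_upwards [hne, hframe, eventually_isUnitFrame_frameNear hx hy hF₀ hpair]
    with t ht hFt hGt
  exact (hGt.eq_or_eq_neg hFt).resolve_right fun h ↦ ht (by rw [h, neg_add_cancel])

end Continuity

theorem contDiffAt_of_isUnitFrame {E : Type*} [NormedAddCommGroup E] [NormedSpace ℝ E]
    {n : WithTop ℕ∞} {x y F : E → ℍ[ℝ]} {z : E} (hx : ContDiffAt ℝ n x z)
    (hy : ContDiffAt ℝ n y z) (hF : ContinuousAt F z)
    (hpair : ∀ᶠ w in 𝓝 z, IsQuaternionPair (x w) (y w))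
    (hframe : ∀ᶠ w in 𝓝 z, IsUnitFrame (x w) (y w) (F w)) : ContDiffAt ℝ n F z := by
  have hsum : ContDiffAt ℝ n (fun w ↦ intertwinerSum (x w) (y w) quatI quatJ (F z)) z := by
    unfold intertwinerSum
    fun_prop
  have hne := hframe.self_of_nhds.intertwinerSum_ne_zero
  exact (((hsum.norm ℝ hne).inv (norm_ne_zero_iff.2 hne)).smul hsum).congr_of_eventuallyEq
    (eventuallyEq_frameNear hx.continuousAt hy.continuousAt hF hpair hframe)

end UnitFrame

section SignCovering

variable {K : Type*} [NormedDivisionRing K]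

variable (K) in
/-- The subgroup `{1, -1}` of the unit sphere of a normed division ring. -/
def signSubgroup : Subgroup (Metric.sphere (0 : K) 1) where
  carrier := {1, -1}
  one_mem' := by simp
  mul_mem' := by rintro a b (rfl | rfl) (rfl | rfl) <;> simp
  inv_mem' := by rintro a (rfl | rfl) <;> simp [inv_eq_of_mul_eq_one_right]

theorem mk_signSubgroup_eq_iff {a b : Metric.sphere (0 : K) 1} :
    (a : Metric.sphere (0 : K) 1 ⧸ signSubgroup K) = b ↔ b = a ∨ b = -a := by
  rw [QuotientGroup.eq]
  change (a⁻¹ * b = 1 ∨ a⁻¹ * b = -1) ↔ _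
  rw [inv_mul_eq_iff_eq_mul, inv_mul_eq_iff_eq_mul, mul_one, mul_neg_one]

variable (K) in
theorem isCoveringMap_mk_signSubgroup :
    IsCoveringMap (QuotientGroup.mk (s := signSubgroup K)) :=
  (Subgroup.isQuotientCoveringMap (signSubgroup K)
    (Set.toFinite ({1, -1} : Set (Metric.sphere (0 : K) 1))).isDiscrete).isCoveringMap

variable {T : Type*} [TopologicalSpace T]

theorem exists_continuous_eq_or_eq_neg [SimplyConnectedSpace T] [LocallyPathConnectedSpace T]
    {L : T → Metric.sphere (0 : K) 1}
    (hL : ∀ t₀, ∃ M : T → Metric.sphere (0 : K) 1,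
      ContinuousAt M t₀ ∧ ∀ᶠ t in 𝓝 t₀, L t = M t ∨ L t = -M t) :
    ∃ F : T → Metric.sphere (0 : K) 1, Continuous F ∧ ∀ t, F t = L t ∨ F t = -L t := by
  have hcont : Continuous fun t ↦ (L t : Metric.sphere (0 : K) 1 ⧸ signSubgroup K) := by
    refine continuous_iff_continuousAt.2 fun t₀ ↦ ?_
    obtain ⟨M, hM, hLM⟩ := hL t₀
    refine (QuotientGroup.continuous_mk.continuousAt.comp hM).congr ?_
    filter_upwards [hLM] with t ht using mk_signSubgroup_eq_iff.2 ht
  obtain ⟨t₀⟩ : Nonempty T := inferInstance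
  obtain ⟨F, ⟨-, hF⟩, -⟩ :=
    (isCoveringMap_mk_signSubgroup K).existsUnique_continuousMap_lifts ⟨_, hcont⟩ t₀ (L t₀) rfl
  exact ⟨F, F.continuous, fun t ↦ mk_signSubgroup_eq_iff.1 (congrFun hF t).symm⟩

end SignCovering

section FrameLift

open scoped Quaternion

theorem exists_continuous_isUnitFrame {T : Type*} [TopologicalSpace T] [SimplyConnectedSpace T]
    [LocallyPathConnectedSpace T] {x y : T → ℍ[ℝ]} (hx : Continuous x) (hy : Continuous y)
    (hpair : ∀ t, IsQuaternionPair (x t) (y t)) :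
    ∃ F : T → ℍ[ℝ], Continuous F ∧ ∀ t, IsUnitFrame (x t) (y t) (F t) := by
  classical
  choose L hL using fun t ↦ exists_isUnitFrame (hpair t)
  obtain ⟨F, hF, hFL⟩ := exists_continuous_eq_or_eq_neg
    (L := fun t ↦ ⟨L t, mem_sphere_zero_iff_norm.2 (hL t).norm_eq_one⟩) fun t₀ ↦ by
    have hnear := eventually_isUnitFrame_frameNear hx.continuousAt hy.continuousAt (hL t₀)
      (Eventually.of_forall hpair)
    refine ⟨fun t ↦ if ht : _ then ⟨frameNear (x t) (y t) (L t₀), ht⟩ else 1, ?_, ?_⟩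
    · rw [Topology.IsInducing.subtypeVal.continuousAt_iff]
      refine (continuousAt_frameNear hx.continuousAt hy.continuousAt (hL t₀)).congr ?_
      filter_upwards [hnear] with t ht
      simp [ht.norm_eq_one]
    · filter_upwards [hnear] with t ht
      simpa [ht.norm_eq_one, Subtype.ext_iff] using ht.eq_or_eq_neg (hL t)
  refine ⟨fun t ↦ F t, by fun_prop, fun t ↦ ?_⟩
  rcases hFL t with h | h
  · simpa [h] using hL t
  · simpa [h] using (hL t).neg

theorem exists_contDiffAt_isUnitFrame {E : Type*} [NormedAddCommGroup E] [NormedSpace ℝ E]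
    {n : WithTop ℕ∞} {S : Set E} (hS : IsOpen S) (hSc : S.Nonempty → SimplyConnectedSpace S)
    {x y : E → ℍ[ℝ]} (hx : ∀ z ∈ S, ContDiffAt ℝ n x z) (hy : ∀ z ∈ S, ContDiffAt ℝ n y z)
    (hpair : ∀ z ∈ S, IsQuaternionPair (x z) (y z)) :
    ∃ F : E → ℍ[ℝ], ∀ z ∈ S, ContDiffAt ℝ n F z ∧ IsUnitFrame (x z) (y z) (F z) := by
  rcases S.eq_empty_or_nonempty with rfl | hne
  · exact ⟨0, by simp⟩
  have := hSc hne
  have := hS.locallyPathConnectedSpace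
  obtain ⟨G, hG, hGframe⟩ := exists_continuous_isUnitFrame (T := S)
    (ContinuousOn.domRestrict fun z hz ↦ (hx z hz).continuousAt.continuousWithinAt)
    (ContinuousOn.domRestrict fun z hz ↦ (hy z hz).continuousAt.continuousWithinAt)
    fun z ↦ hpair z z.2
  obtain ⟨F, rfl⟩ : ∃ F : E → ℍ[ℝ], S.domRestrict F = G :=
    ⟨Function.extend Subtype.val G 0, funext fun z ↦ Subtype.val_injective.extend_apply G 0 z⟩
  have hF : ContinuousOn F S := continuousOn_iff_continuous_domRestrict.2 hG
  refine ⟨F, fun z hz ↦ ⟨contDiffAt_of_isUnitFrame (hx z hz) (hy z hz)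
    (hF.continuousAt (hS.mem_nhds hz)) ?_ ?_, hGframe ⟨z, hz⟩⟩⟩
  · filter_upwards [hS.mem_nhds hz] with w hw using hpair w hw
  · filter_upwards [hS.mem_nhds hz] with w hw using hGframe ⟨w, hw⟩

end FrameLift

/-! ### The Lie algebra `su(2)` and its spin frames -/

section SU2

open scoped Quaternion

/-- The Lie algebra `su(2)` of traceless skew-Hermitian matrices. -/
def su2 : Submodule ℝ M2 where
  carrier := {X | Xᴴ = -X ∧ X.trace = 0}
  zero_mem' := by simp
  add_mem' hX hY := ⟨by rw [conjTranspose_add, hX.1, hY.1, neg_add], by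
    rw [trace_add, hX.2, hY.2, add_zero]⟩
  smul_mem' c X hX := ⟨by simp [conjTranspose_smul, hX.1], by rw [trace_smul, hX.2, smul_zero]⟩

/-- The embedding of the quaternions into the complex matrices with `i, j, k ↦ e₁, e₂, e₃`. -/
def quatToMatrix : ℍ[ℝ] →ₐ[ℝ] M2 :=
  QuaternionAlgebra.lift
    { i := e1
      j := e2
      k := e3
      i_mul_i := by ext a b; fin_cases a <;> fin_cases b <;> simp [e1]
      j_mul_j := by ext a b; fin_cases a <;> fin_cases b <;> simp [e2]
      i_mul_j := by ext a b; fin_cases a <;> fin_cases b <;> simp [e1, e2, e3]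
      j_mul_i := by ext a b; fin_cases a <;> fin_cases b <;> simp [e1, e2, e3] }

theorem quatToMatrix_apply (q : ℍ[ℝ]) : quatToMatrix q =
    !![q.re + q.imK * I, q.imJ - q.imI * I; -q.imJ - q.imI * I, q.re - q.imK * I] := by
  change algebraMap ℝ M2 q.re + q.imI • e1 + q.imJ • e2 + q.imK • e3 = _
  ext a b
  fin_cases a <;> fin_cases b <;>
    simp [e1, e2, e3, Algebra.algebraMap_eq_smul_one, sub_eq_add_neg, add_comm]

theorem quatToMatrix_quatI : quatToMatrix quatI = e1 := by
  simp [quatToMatrix_apply, e1]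

theorem quatToMatrix_quatJ : quatToMatrix quatJ = e2 := by
  simp [quatToMatrix_apply, e2]

theorem e1_mul_e2 : e1 * e2 = e3 := by
  simp [e1, e2, e3]

theorem quatToMatrix_star (q : ℍ[ℝ]) : quatToMatrix (star q) = (quatToMatrix q)ᴴ := by
  ext a b
  fin_cases a <;> fin_cases b <;> simp [quatToMatrix_apply, sub_eq_add_neg, add_comm]

theorem conjTranspose_mul_quatToMatrix {q : ℍ[ℝ]} (hq : ‖q‖ = 1) :
    (quatToMatrix q)ᴴ * quatToMatrix q = 1 := by
  rw [← quatToMatrix_star, ← map_mul, Quaternion.star_mul_self, Quaternion.normSq_eq_norm_mul_self,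
    hq, mul_one, Quaternion.coe_one, map_one]

theorem det_quatToMatrix (q : ℍ[ℝ]) : (quatToMatrix q).det = (‖q‖ ^ 2 : ℝ) := by
  rw [sq, ← Quaternion.normSq_eq_norm_mul_self, Quaternion.normSq_def', quatToMatrix_apply,
    det_fin_two_of]
  push_cast
  linear_combination (-(q.imI : ℂ) ^ 2 - (q.imK : ℂ) ^ 2) * I_sq

theorem exists_quatToMatrix_eq {X : M2} (hX : X ∈ su2) :
    ∃ q : ℍ[ℝ], q.re = 0 ∧ quatToMatrix q = X := by
  obtain ⟨hskew, htrace⟩ := hX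
  refine ⟨⟨0, -(X 0 1).im, (X 0 1).re, (X 0 0).im⟩, rfl, (quatToMatrix_apply _).trans ?_⟩
  rw [trace_fin_two] at htrace
  have h00 := congrFun₂ hskew 0 0
  have h01 := congrFun₂ hskew 0 1
  simp only [conjTranspose_apply, star_def, Matrix.neg_apply, Complex.ext_iff, conj_re, conj_im,
    neg_re, neg_im, add_re, add_im, zero_re, zero_im] at h00 h01 htrace
  ext a b
  fin_cases a <;> fin_cases b <;> apply Complex.ext <;> simp <;> linarith

theorem exists_leftInverse_quatToMatrix :
    ∃ R : M2 →L[ℝ] ℍ[ℝ], ∀ q, R (quatToMatrix q) = q := by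
  obtain ⟨R, hR⟩ := quatToMatrix.toLinearMap.exists_leftInverse_of_injective
    (LinearMap.ker_eq_bot.2 quatToMatrix.toRingHom.injective)
  exact ⟨LinearMap.toContinuousLinearMap R, LinearMap.congr_fun hR⟩

theorem ip_quatToMatrix (p q : ℍ[ℝ]) :
    ip (quatToMatrix p) (quatToMatrix q) = (-(p * q).re : ℝ) := by
  rw [ip, ← map_mul, quatToMatrix_apply, trace_fin_two_of]
  push_cast
  ring

variable {X Y : M2}

theorem ofReal_re_ip (hX : X ∈ su2) (hY : Y ∈ su2) : ((ip X Y).re : ℂ) = ip X Y := by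
  obtain ⟨p, -, rfl⟩ := exists_quatToMatrix_eq hX
  obtain ⟨q, -, rfl⟩ := exists_quatToMatrix_eq hY
  rw [ip_quatToMatrix, ofReal_re]

theorem re_ip_self_pos (hX : X ∈ su2) (h0 : X ≠ 0) : 0 < (ip X X).re := by
  obtain ⟨q, hq, rfl⟩ := exists_quatToMatrix_eq hX
  have hstar : star q = -q := Quaternion.star_eq_neg.2 hq
  have hnormSq : -(q * q).re = Quaternion.normSq q := by
    rw [Quaternion.normSq_def, hstar, mul_neg, Quaternion.re_neg]
  rw [ip_quatToMatrix, ofReal_re, hnormSq, Quaternion.normSq_eq_norm_mul_self]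
  have hq0 : q ≠ 0 := fun h ↦ h0 (by rw [h, map_zero])
  positivity

theorem mul_add_mul_of_mem_su2 (hX : X ∈ su2) (hY : Y ∈ su2) :
    X * Y + Y * X = (-(2 * ip X Y)) • (1 : M2) := by
  obtain ⟨p, hp, rfl⟩ := exists_quatToMatrix_eq hX
  obtain ⟨q, hq, rfl⟩ := exists_quatToMatrix_eq hY
  have hanti : p * q + q * p = ((2 * (p * q).re : ℝ) : ℍ[ℝ]) := by
    ext <;> simp [hp, hq] <;> ring
  rw [← map_mul, ← map_mul, ← map_add, hanti, ip_quatToMatrix]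
  generalize (p * q).re = r
  ext a b
  fin_cases a <;> fin_cases b <;> simp [quatToMatrix_apply]

theorem mul_self_of_mem_su2 (hX : X ∈ su2) : X * X = (-ip X X) • (1 : M2) := by
  have h := mul_add_mul_of_mem_su2 hX hX
  rw [← two_smul ℂ, ← mul_neg, mul_smul] at h
  exact smul_right_injective M2 (two_ne_zero (α := ℂ)) h

theorem mul_eq_neg_mul_of_mem_su2 (hX : X ∈ su2) (hY : Y ∈ su2) (hXY : ip X Y = 0) :
    Y * X = -(X * Y) :=
  eq_neg_of_add_eq_zero_right (by
    rw [mul_add_mul_of_mem_su2 hX hY, hXY, mul_zero, neg_zero, zero_smul])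

theorem ip_commutator_mul (hX : X ∈ su2) (hY : Y ∈ su2) (hXY : ip X Y = 0) :
    ip (X * Y - Y * X) (X * Y) = 2 * (ip X X * ip Y Y) := by
  have hanti := mul_eq_neg_mul_of_mem_su2 hX hY hXY
  have hprod : X * Y * (X * Y) = (-(ip X X * ip Y Y)) • (1 : M2) := by
    calc X * Y * (X * Y) = X * (Y * X) * Y := by simp only [mul_assoc]
      _ = -(X * X * (Y * Y)) := by rw [hanti]; noncomm_ring
      _ = (-(ip X X * ip Y Y)) • (1 : M2) := by
        rw [mul_self_of_mem_su2 hX, mul_self_of_mem_su2 hY, smul_mul_smul_comm, mul_one,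
          neg_mul_neg, neg_smul]
  have htrace : ((1 : M2).trace : ℂ) = 2 := by simp
  rw [hanti, sub_neg_eq_add, ip, add_mul, hprod, ← add_smul, trace_smul, htrace, smul_eq_mul]
  ring

theorem isQuaternionPair_of_mem_su2 (hX : X ∈ su2) (hY : Y ∈ su2) (hXX : ip X X = 1)
    (hYY : ip Y Y = 1) (hXY : ip X Y = 0) : IsQuaternionPair X Y :=
  ⟨by rw [mul_self_of_mem_su2 hX, hXX, neg_smul, one_smul],
    by rw [mul_self_of_mem_su2 hY, hYY, neg_smul, one_smul],
    mul_eq_neg_mul_of_mem_su2 hX hY hXY⟩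

theorem conj_eq_of_isUnitFrame {x y q : ℍ[ℝ]} (h : IsUnitFrame x y q) :
    quatToMatrix q * e1 * (quatToMatrix q)⁻¹ = quatToMatrix x ∧
      quatToMatrix q * e2 * (quatToMatrix q)⁻¹ = quatToMatrix y ∧
      quatToMatrix q * e3 * (quatToMatrix q)⁻¹ = quatToMatrix x * quatToMatrix y := by
  have hinv : quatToMatrix q * (quatToMatrix q)⁻¹ = 1 := mul_nonsing_inv _ (by
    rw [det_quatToMatrix, h.norm_eq_one]
    simp)
  have hx : quatToMatrix q * e1 = quatToMatrix x * quatToMatrix q := by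
    rw [← quatToMatrix_quatI, ← map_mul, ← map_mul, h.left_mul]
  have hy : quatToMatrix q * e2 = quatToMatrix y * quatToMatrix q := by
    rw [← quatToMatrix_quatJ, ← map_mul, ← map_mul, h.right_mul]
  refine ⟨by rw [hx, mul_assoc, hinv, mul_one], by rw [hy, mul_assoc, hinv, mul_one], ?_⟩
  rw [← e1_mul_e2, ← mul_assoc, hx, mul_assoc (quatToMatrix x), hy, mul_assoc, mul_assoc, hinv,
    mul_one]

theorem exists_contDiffAt_su2_frame {E : Type*} [NormedAddCommGroup E] [NormedSpace ℝ E]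
    {n : WithTop ℕ∞} {S : Set E} (hS : IsOpen S) (hSc : S.Nonempty → SimplyConnectedSpace S)
    {X Y : E → M2} (hX : ∀ z ∈ S, ContDiffAt ℝ n X z) (hY : ∀ z ∈ S, ContDiffAt ℝ n Y z)
    (hXsu : ∀ z ∈ S, X z ∈ su2) (hYsu : ∀ z ∈ S, Y z ∈ su2)
    (hpair : ∀ z ∈ S, IsQuaternionPair (X z) (Y z)) :
    ∃ F : E → M2, ∀ z ∈ S, ContDiffAt ℝ n F z ∧ (F z)ᴴ * F z = 1 ∧ (F z).det = 1 ∧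
      F z * e1 * (F z)⁻¹ = X z ∧ F z * e2 * (F z)⁻¹ = Y z ∧ F z * e3 * (F z)⁻¹ = X z * Y z := by
  obtain ⟨R, hR⟩ := exists_leftInverse_quatToMatrix
  have hRX {Z : M2} (hZ : Z ∈ su2) : quatToMatrix (R Z) = Z := by
    obtain ⟨q, -, rfl⟩ := exists_quatToMatrix_eq hZ
    rw [hR]
  obtain ⟨F, hF⟩ := exists_contDiffAt_isUnitFrame hS hSc
    (fun z hz ↦ R.contDiff.contDiffAt.comp z (hX z hz))
    (fun z hz ↦ R.contDiff.contDiffAt.comp z (hY z hz))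
    fun z hz ↦ .of_map (φ := quatToMatrix.toRingHom) quatToMatrix.toRingHom.injective (by
      change IsQuaternionPair (quatToMatrix (R (X z))) (quatToMatrix (R (Y z)))
      rw [hRX (hXsu z hz), hRX (hYsu z hz)]
      exact hpair z hz)
  refine ⟨fun z ↦ quatToMatrix (F z), fun z hz ↦ ⟨?_,
    conjTranspose_mul_quatToMatrix (hF z hz).2.norm_eq_one, ?_, ?_⟩⟩
  · exact (LinearMap.toContinuousLinearMap quatToMatrix.toLinearMap).contDiff.contDiffAt.comp z
      (hF z hz).1
  · rw [det_quatToMatrix, (hF z hz).2.norm_eq_one]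
    simp
  · rw [← hRX (hXsu z hz), ← hRX (hYsu z hz)]
    exact conj_eq_of_isUnitFrame (hF z hz).2

end SU2

/-! ### The equation of surfaces of constant mean curvature -/

section CMCEquation

open scoped ComplexConjugate ContDiff

/-- The conjugation `X ↦ -Xᴴ` of the complexification of `su(2)`, with fixed points `su(2)` on the
traceless matrices. -/
def skewConj : M2 →L[ℝ] M2 :=
  LinearMap.toContinuousLinearMap
    { toFun := fun X ↦ -Xᴴ
      map_add' := fun X Y ↦ by rw [conjTranspose_add, neg_add]
      map_smul' := fun c X ↦ by simp [conjTranspose_smul] }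

theorem skewConj_apply (X : M2) : skewConj X = -Xᴴ := rfl

/-- The right-hand side of the equation `∂²f/∂z∂z̄ = -(iH/2) [∂f/∂z, ∂f/∂z̄]` satisfied by conformal
immersions with constant mean curvature `H`. -/
def cmcBracket (H : ℝ) : M2 →L[ℂ] M2 →L[ℂ] M2 :=
  (-(I * H / 2)) • (ContinuousLinearMap.mul ℂ M2 - (ContinuousLinearMap.mul ℂ M2).flip)

theorem cmcBracket_apply (H : ℝ) (X Y : M2) :
    cmcBracket H X Y = (-(I * H / 2)) • (X * Y - Y * X) := rfl

theorem isAntiConj_cmcBracket (H : ℝ) : IsAntiConj (cmcBracket H) skewConj where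
  map_smul c X := by
    change -(c • X)ᴴ = conj c • -Xᴴ
    rw [conjTranspose_smul, smul_neg, star_def]
  involutive X := by
    change -(-Xᴴ)ᴴ = X
    rw [conjTranspose_neg, conjTranspose_conjTranspose, neg_neg]
  map_bilin X Y := by
    change -((-(I * H / 2)) • (X * Y - Y * X))ᴴ = (-(I * H / 2)) • (-Yᴴ * -Xᴴ - -Xᴴ * -Yᴴ)
    simp [conjTranspose_smul, conjTranspose_sub, conjTranspose_mul, neg_div]

theorem ip_comm (X Y : M2) : ip X Y = ip Y X := by
  rw [ip, ip, trace_mul_comm]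

theorem ip_skewConj (X Y : M2) : ip (skewConj X) (skewConj Y) = conj (ip X Y) := by
  rw [ip_comm X Y, ip, ip, skewConj_apply, skewConj_apply, neg_mul_neg, ← conjTranspose_mul,
    trace_conjTranspose, map_mul, star_def, map_neg, map_div₀, map_one, map_ofNat]

theorem ip_add_self (X Y : M2) : ip (X + Y) (X + Y) = ip X X + 2 * ip X Y + ip Y Y := by
  have h := trace_mul_comm Y X
  simp only [ip, add_mul, mul_add, trace_add, h]
  ring

theorem ip_smul_right (d : ℂ) (X Y : M2) : ip X (d • Y) = d * ip X Y := by
  simp only [ip, Matrix.mul_smul, Matrix.trace_smul, smul_eq_mul]; ring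

theorem ip_smul_smul (c d : ℂ) (X Y : M2) : ip (c • X) (d • Y) = c * d * ip X Y := by
  simp only [ip, Matrix.smul_mul, Matrix.mul_smul, trace_smul, smul_eq_mul]
  ring

theorem trace_cmcBracket (H : ℝ) (X Y : M2) : (cmcBracket H X Y).trace = 0 := by
  rw [cmcBracket_apply, trace_smul, trace_sub, trace_mul_comm, sub_self, smul_zero]

theorem ip_cmcBracket_right (H : ℝ) (X Y : M2) : ip X (cmcBracket H X Y) = 0 := by
  rw [cmcBracket_apply, ip, Matrix.mul_smul, trace_smul, mul_sub, trace_sub,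
    trace_mul_comm X (Y * X), mul_assoc, trace_mul_comm Y, mul_assoc, sub_self, smul_zero, mul_zero]

theorem analyticOnNhd_ip_self : AnalyticOnNhd ℂ (fun X : M2 ↦ ip X X) Set.univ := by
  intro X _
  have hsq : AnalyticAt ℂ (fun X : M2 ↦ X * X) X := analyticAt_id.mul analyticAt_id
  exact analyticAt_const.mul (AnalyticAt.fun_comp (f := fun X : M2 ↦ X * X)
    ((traceLinearMap (Fin 2) ℂ ℂ).toContinuousLinearMap.analyticAt _) hsq)

theorem fderiv_ip_self_apply (X Y : M2) : fderiv ℂ (fun X : M2 ↦ ip X X) X Y = 2 * ip X Y := by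
  have h : HasFDerivAt (fun X : M2 ↦ ip X X) _ X :=
    (((traceLinearMap (Fin 2) ℂ ℂ).toContinuousLinearMap.hasFDerivAt).comp X
      ((hasFDerivAt_id X).mul' (hasFDerivAt_id X))).const_mul _
  rw [h.fderiv]
  change -(1 / 2 : ℂ) * (X * Y + Y * X).trace = _
  rw [trace_add, trace_mul_comm Y, ip]
  ring

end CMCEquation

section WirtingerData

open scoped ComplexConjugate

variable {P X Y : M2}

theorem smul_add_smul_skewConj_mem_su2 (hP : P.trace = 0) (h : ℂ) :
    h • P + conj h • skewConj P ∈ su2 := by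
  constructor
  · simp [skewConj_apply, conjTranspose_smul, add_comm]
  · simp [skewConj_apply, trace_conjTranspose, hP]

theorem ip_add_skewConj_self (hP : ip P P = 0) :
    ip (P + skewConj P) (P + skewConj P) =
      ip (I • P + conj I • skewConj P) (I • P + conj I • skewConj P) := by
  simp only [ip_add_self, ip_smul_smul, ip_skewConj, hP, conj_I, map_zero, mul_neg, I_mul_I]
  ring

theorem ip_add_skewConj_I_smul (hP : ip P P = 0) :
    ip (P + skewConj P) (I • P + conj I • skewConj P) = 0 := by
  have hP' := ip_skewConj P P
  have hcomm := trace_mul_comm P (skewConj P)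
  rw [hP, map_zero] at hP'
  simp only [ip, add_mul, mul_add, Matrix.mul_smul, trace_add, trace_smul, smul_eq_mul, conj_I] at *
  linear_combination I * hP - I * hP' + I / 2 * hcomm

theorem four_smul_cmcBracket_skewConj (H : ℝ) (P : M2) :
    (4 : ℂ) • cmcBracket H P (skewConj P) = (H : ℂ) •
      ((P + skewConj P) * (I • P + conj I • skewConj P) -
        (I • P + conj I • skewConj P) * (P + skewConj P)) := by
  simp only [cmcBracket_apply, conj_I, add_mul, mul_add, Matrix.smul_mul,
    Matrix.mul_smul]
  module

/-- The value of `∂f/∂z` at a point where `∂f/∂x = X` and `∂f/∂y = Y`. -/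
def dzOfPartials (X Y : M2) : M2 := (2 : ℂ)⁻¹ • (X - I • Y)

theorem skewConj_dzOfPartials (hX : X ∈ su2) (hY : Y ∈ su2) :
    skewConj (dzOfPartials X Y) = (2 : ℂ)⁻¹ • (X + I • Y) := by
  simp [skewConj_apply, dzOfPartials, conjTranspose_smul, hX.1, hY.1, add_comm, ← smul_neg]

theorem dzOfPartials_add_skewConj (hX : X ∈ su2) (hY : Y ∈ su2) :
    dzOfPartials X Y + skewConj (dzOfPartials X Y) = X := by
  rw [skewConj_dzOfPartials hX hY, dzOfPartials]
  module

theorem I_smul_dzOfPartials_add_skewConj (hX : X ∈ su2) (hY : Y ∈ su2) :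
    I • dzOfPartials X Y + conj I • skewConj (dzOfPartials X Y) = Y := by
  have hI : (2 : ℂ)⁻¹ • ((-(I * I)) • Y + (-(I * I)) • Y) = Y := by
    rw [I_mul_I]
    module
  rw [skewConj_dzOfPartials hX hY, dzOfPartials, conj_I]
  refine Eq.trans ?_ hI
  module

theorem trace_dzOfPartials (hX : X ∈ su2) (hY : Y ∈ su2) : (dzOfPartials X Y).trace = 0 := by
  simp [dzOfPartials, hX.2, hY.2]

theorem ip_dzOfPartials_self (hXY : ip X Y = 0) (hnorm : ip X X = ip Y Y) :
    ip (dzOfPartials X Y) (dzOfPartials X Y) = 0 := by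
  have hXY' : ip X ((-I) • Y) = 0 := by rw [ip_smul_right, hXY, mul_zero]
  rw [dzOfPartials, ip_smul_smul, sub_eq_add_neg, ← neg_smul, ip_add_self, ip_smul_smul, hXY',
    hnorm, neg_mul_neg, I_mul_I]
  ring

end WirtingerData

section PointwiseCMC

open scoped ComplexConjugate ContDiff

/-- `f` is, at the point `ζ`, a smooth conformal immersion into `su(2)` with mean curvature `H`.
The last condition is the mean curvature equation `Δf = 2H (∂f/∂x × ∂f/∂y)`, since the cross
product of `su(2) = E³` is half the commutator; it involves no choice of a frame. -/
structure IsConformalCMCAt (H : ℝ) (f : ℂ → M2) (ζ : ℂ) : Prop where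
  contDiffAt : ContDiffAt ℝ ∞ f ζ
  mem_su2 : f ζ ∈ su2
  px_mem_su2 : px f ζ ∈ su2
  py_mem_su2 : py f ζ ∈ su2
  px_ne_zero : px f ζ ≠ 0
  ip_px_px : ip (px f ζ) (px f ζ) = ip (py f ζ) (py f ζ)
  ip_px_py : ip (px f ζ) (py f ζ) = 0
  laplacian : px (px f) ζ + py (py f) ζ = (H : ℂ) • (px f ζ * py f ζ - py f ζ * px f ζ)

theorem eventually_mem_submodule {E V : Type*} [NormedAddCommGroup E] [NormedSpace ℝ E]
    [NormedAddCommGroup V] [NormedSpace ℝ V] {U : Submodule ℝ V} (hclosed : IsClosed (U : Set V))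
    {f : E → V} {x₀ : E} (hf : ∀ᶠ x in 𝓝 x₀, DifferentiableAt ℝ f x)
    (hU : ∀ᶠ x in 𝓝 x₀, ∀ h, fderiv ℝ f x h ∈ U) (hx₀ : f x₀ ∈ U) : ∀ᶠ x in 𝓝 x₀, f x ∈ U := by
  have := hclosed
  simpa using eventually_map_eq_zero U.mkQL hf (by simpa using hU) (by simpa using hx₀)

theorem deriv_mem_submodule {V : Type*} [NormedAddCommGroup V] [NormedSpace ℝ V]
    {U : Submodule ℝ V} (hclosed : IsClosed (U : Set V)) {f : ℝ → V} {x : ℝ}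
    (hf : DifferentiableAt ℝ f x) (hU : ∀ᶠ t in 𝓝 x, f t ∈ U) : deriv f x ∈ U := by
  have := hclosed
  have hzero : HasDerivAt (U.mkQL ∘ f) 0 x :=
    (hasDerivAt_const x (0 : V ⧸ U)).congr_of_eventuallyEq (by
      filter_upwards [hU] with t ht
      simpa using ht)
  simpa using (U.mkQL.hasFDerivAt.comp_hasDerivAt x hf.hasDerivAt).unique hzero

theorem isClosed_su2 : IsClosed (su2 : Set M2) :=
  su2.closed_of_finiteDimensional

variable {a : ℂ → M2} {f₀ : ℝ → M2} {x₀ : ℝ} {f : ℂ → M2} {P : M2} {ζ : ℂ}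

theorem px_eq_of_hasFDerivAt (hf : HasFDerivAt f (wirtingerForm (P, skewConj P)) ζ) :
    px f ζ = P + skewConj P := by
  calc px f ζ = wirtingerForm (P, skewConj P) 1 := congrArg (fun L ↦ L 1) hf.fderiv
    _ = P + skewConj P := by simp

theorem py_eq_of_hasFDerivAt (hf : HasFDerivAt f (wirtingerForm (P, skewConj P)) ζ) :
    py f ζ = I • P + conj I • skewConj P := by
  exact congrArg (fun L ↦ L I) hf.fderiv

/-- The surface of constant mean curvature `H` with `∂f/∂z = a` and `f = f₀` on the real axis. -/
def cmcSurface (H : ℝ) (a : ℂ → M2) (f₀ : ℝ → M2) : ℂ → M2 :=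
  sliceSurface (cmcBracket H) skewConj a f₀

/-- The derivative `∂f/∂z` of `cmcSurface H a f₀`. -/
def cmcDz (H : ℝ) (a : ℂ → M2) : ℂ → M2 :=
  sliceSol (cmcBracket H) skewConj a

theorem cmcSurface_ofReal (H : ℝ) (a : ℂ → M2) (f₀ : ℝ → M2) (x : ℝ) :
    cmcSurface H a f₀ x = f₀ x :=
  sliceSurface_ofReal (V := M2) x

theorem cmcDz_ofReal (H : ℝ) (ha : AnalyticAt ℂ a x₀) : cmcDz H a x₀ = a x₀ :=
  sliceSol_ofReal (isAntiConj_cmcBracket H) ha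

theorem eventually_hasFDerivAt_cmcSurface (H : ℝ) (ha : AnalyticAt ℂ a x₀)
    (hf₀ : ∀ᶠ x : ℝ in 𝓝 x₀, HasDerivAt f₀ (a x + skewConj (a x)) x) :
    ∀ᶠ ζ in 𝓝 (x₀ : ℂ), HasFDerivAt (cmcSurface H a f₀)
      (wirtingerForm (cmcDz H a ζ, skewConj (cmcDz H a ζ))) ζ :=
  eventually_hasFDerivAt_sliceSurface (isAntiConj_cmcBracket H) ha hf₀

theorem eventually_trace_cmcDz_eq_zero (H : ℝ) (ha : AnalyticAt ℂ a x₀)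
    (htrace : ∀ᶠ x : ℝ in 𝓝 x₀, (a x).trace = 0) :
    ∀ᶠ ζ in 𝓝 (x₀ : ℂ), (cmcDz H a ζ).trace = 0 := by
  let traceCLM : M2 →L[ℂ] ℂ := (traceLinearMap (Fin 2) ℂ ℂ).toContinuousLinearMap
  exact eventually_apply_sliceSol_eq_zero (Φ := traceCLM) (isAntiConj_cmcBracket H) ha
    (fun X _ ↦ traceCLM.analyticAt X)
    (fun X Y ↦ (DFunLike.congr_fun traceCLM.fderiv _).trans (trace_cmcBracket H X Y)) htrace

theorem eventually_ip_cmcDz_eq_zero (H : ℝ) (ha : AnalyticAt ℂ a x₀)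
    (hnull : ∀ᶠ x : ℝ in 𝓝 x₀, ip (a x) (a x) = 0) :
    ∀ᶠ ζ in 𝓝 (x₀ : ℂ), ip (cmcDz H a ζ)
      (cmcDz H a ζ) = 0 :=
  eventually_apply_sliceSol_eq_zero (Φ := fun X : M2 ↦ ip X X) (isAntiConj_cmcBracket H) ha
    analyticOnNhd_ip_self (fun X Y ↦ (fderiv_ip_self_apply X _).trans
      (mul_eq_zero_of_right 2 (ip_cmcBracket_right H X Y))) hnull

theorem eventually_cmcDz_add_skewConj_ne_zero (H : ℝ) (ha : AnalyticAt ℂ a x₀)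
    (hreg : a x₀ + skewConj (a x₀) ≠ 0) :
    ∀ᶠ ζ in 𝓝 (x₀ : ℂ), cmcDz H a ζ +
      skewConj (cmcDz H a ζ) ≠ 0 := by
  have hθ := isAntiConj_cmcBracket H
  have hcont : ContinuousAt (cmcDz H a) x₀ :=
    (eventually_contDiffAt_sliceSol hθ ha).self_of_nhds.continuousAt
  refine (hcont.add (skewConj.continuous.continuousAt.comp hcont)).eventually_ne ?_
  simpa [cmcDz_ofReal H ha] using hreg

theorem eventually_isConformalCMCAt_cmcSurface (H : ℝ) (ha : AnalyticAt ℂ a x₀)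
    (hf₀ : ∀ᶠ x : ℝ in 𝓝 x₀, HasDerivAt f₀ (a x + skewConj (a x)) x)
    (htrace : ∀ᶠ x : ℝ in 𝓝 x₀, (a x).trace = 0) (hnull : ∀ᶠ x : ℝ in 𝓝 x₀, ip (a x) (a x) = 0)
    (hsu : f₀ x₀ ∈ su2) (hreg : a x₀ + skewConj (a x₀) ≠ 0) :
    ∀ᶠ ζ in 𝓝 (x₀ : ℂ), IsConformalCMCAt H (cmcSurface H a f₀) ζ := by
  have hθ := isAntiConj_cmcBracket H
  have hderiv := eventually_hasFDerivAt_cmcSurface H ha hf₀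
  have htrace' := eventually_trace_cmcDz_eq_zero H ha htrace
  have hmem : ∀ᶠ ζ in 𝓝 (x₀ : ℂ), cmcSurface H a f₀ ζ ∈ su2 := by
    refine eventually_mem_submodule isClosed_su2 (hderiv.mono fun ζ hζ ↦ hζ.differentiableAt)
      ?_ (by rwa [cmcSurface_ofReal])
    filter_upwards [hderiv, htrace'] with ζ hζ htrace h
    rw [hζ.fderiv]
    exact smul_add_smul_skewConj_mem_su2 htrace h
  filter_upwards [hderiv, htrace', eventually_ip_cmcDz_eq_zero H ha hnull, hmem,
    eventually_cmcDz_add_skewConj_ne_zero H ha hreg,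
    eventually_contDiffAt_sliceSurface hθ ha hf₀, eventually_laplacian_sliceSurface hθ ha hf₀]
    with ζ hderiv htrace hnull hmem hreg hsmooth hlap
  have hpx := px_eq_of_hasFDerivAt hderiv
  have hpy := py_eq_of_hasFDerivAt hderiv
  exact
    { contDiffAt := hsmooth
      mem_su2 := hmem
      px_mem_su2 := by simpa [hpx] using smul_add_smul_skewConj_mem_su2 htrace 1
      py_mem_su2 := hpy ▸ smul_add_smul_skewConj_mem_su2 htrace I
      px_ne_zero := hpx ▸ hreg
      ip_px_px := by rw [hpx, hpy, ip_add_skewConj_self hnull]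
      ip_px_py := by rw [hpx, hpy, ip_add_skewConj_I_smul hnull]
      laplacian := by rw [hpx, hpy, ← four_smul_cmcBracket_skewConj]; exact hlap }

end PointwiseCMC

section Immersion

open scoped ContDiff

theorem ofReal_smul_mem_su2 (c : ℝ) {X : M2} (hX : X ∈ su2) : (c : ℂ) • X ∈ su2 :=
  su2.smul_mem c hX

/-- The exponent `u` in the conformal metric `4 e²ᵘ (dx² + dy²)` induced by `f`. -/
def logConformalFactor (f : ℂ → M2) (ζ : ℂ) : ℝ :=
  Real.log ((ip (px f ζ) (px f ζ)).re / 4) / 2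

/-- The factor by which the coordinate vectors of a conformal `f` are scaled to unit length. -/
def tangentScale (f : ℂ → M2) (ζ : ℂ) : ℝ :=
  (2 * Real.exp (logConformalFactor f ζ))⁻¹

theorem tangentScale_mul_self (f : ℂ → M2) (ζ : ℂ) :
    tangentScale f ζ * tangentScale f ζ * (4 * Real.exp (2 * logConformalFactor f ζ)) = 1 := by
  rw [tangentScale, two_mul (logConformalFactor f ζ), Real.exp_add]
  field_simp
  norm_num

namespace IsConformalCMCAt

variable {H : ℝ} {f : ℂ → M2} {ζ : ℂ}

theorem re_ip_px_pos (h : IsConformalCMCAt H f ζ) : 0 < (ip (px f ζ) (px f ζ)).re :=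
  re_ip_self_pos h.px_mem_su2 h.px_ne_zero

theorem ip_px_eq_exp (h : IsConformalCMCAt H f ζ) :
    ip (px f ζ) (px f ζ) = ((4 * Real.exp (2 * logConformalFactor f ζ) : ℝ) : ℂ) := by
  rw [logConformalFactor, mul_div_cancel₀ _ two_ne_zero,
    Real.exp_log (div_pos h.re_ip_px_pos four_pos), mul_div_cancel₀ _ four_ne_zero,
    ofReal_re_ip h.px_mem_su2 h.px_mem_su2]

theorem contDiffAt_px (h : IsConformalCMCAt H f ζ) : ContDiffAt ℝ ∞ (px f) ζ :=
  (h.contDiffAt.fderiv_right (by simp)).clm_apply contDiffAt_const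

theorem contDiffAt_py (h : IsConformalCMCAt H f ζ) : ContDiffAt ℝ ∞ (py f) ζ :=
  (h.contDiffAt.fderiv_right (by simp)).clm_apply contDiffAt_const

theorem contDiffAt_logConformalFactor (h : IsConformalCMCAt H f ζ) :
    ContDiffAt ℝ ∞ (logConformalFactor f) ζ := by
  have hre : ContDiffAt ℝ ∞ (fun ζ ↦ (ip (px f ζ) (px f ζ)).re) ζ :=
    reCLM.contDiff.contDiffAt.comp ζ <|
      ((analyticOnNhd_ip_self _ trivial).contDiffAt.restrict_scalars ℝ).comp ζ h.contDiffAt_px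
  exact ((hre.div_const 4).log (div_pos h.re_ip_px_pos four_pos).ne').div_const 2

theorem contDiffAt_tangentScale (h : IsConformalCMCAt H f ζ) :
    ContDiffAt ℝ ∞ (fun ζ ↦ (tangentScale f ζ : ℂ)) ζ :=
  ofRealCLM.contDiff.contDiffAt.comp ζ <|
    (contDiffAt_const.mul h.contDiffAt_logConformalFactor.exp).inv (by positivity)

theorem isQuaternionPair (h : IsConformalCMCAt H f ζ) :
    IsQuaternionPair ((tangentScale f ζ : ℂ) • px f ζ)
      ((tangentScale f ζ : ℂ) • py f ζ) := by
  have hunit : (tangentScale f ζ : ℂ) * tangentScale f ζ *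
      ((4 * Real.exp (2 * logConformalFactor f ζ) : ℝ) : ℂ) = 1 := by
    exact_mod_cast tangentScale_mul_self f ζ
  refine isQuaternionPair_of_mem_su2 (ofReal_smul_mem_su2 _ h.px_mem_su2)
    (ofReal_smul_mem_su2 _ h.py_mem_su2) ?_ ?_ ?_
  · rw [ip_smul_smul, h.ip_px_eq_exp, hunit]
  · rw [ip_smul_smul, ← h.ip_px_px, h.ip_px_eq_exp, hunit]
  · rw [ip_smul_smul, h.ip_px_py, mul_zero]

theorem ip_laplacian (h : IsConformalCMCAt H f ζ) :
    ip (px (px f) ζ + py (py f) ζ)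
      (((tangentScale f ζ : ℂ) • px f ζ) *
        ((tangentScale f ζ : ℂ) • py f ζ)) =
      ((8 * Real.exp (2 * logConformalFactor f ζ) * H : ℝ) : ℂ) := by
  rw [h.laplacian, smul_mul_smul_comm, ip_smul_smul,
    ip_commutator_mul h.px_mem_su2 h.py_mem_su2 h.ip_px_py, ← h.ip_px_px, h.ip_px_eq_exp]
  norm_cast
  linear_combination
    8 * Real.exp (2 * logConformalFactor f ζ) * H * tangentScale_mul_self f ζ

theorem isCMCImmersion {S : Set ℂ} (hS : IsOpen S) (hSc : S.Nonempty → SimplyConnectedSpace S)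
    (h : ∀ ζ ∈ S, IsConformalCMCAt H f ζ) : IsCMCImmersion S H f := by
  obtain ⟨F, hF⟩ := exists_contDiffAt_su2_frame hS hSc
    (fun ζ hζ ↦ (h ζ hζ).contDiffAt_tangentScale.smul (h ζ hζ).contDiffAt_px)
    (fun ζ hζ ↦ (h ζ hζ).contDiffAt_tangentScale.smul (h ζ hζ).contDiffAt_py)
    (fun ζ hζ ↦ ofReal_smul_mem_su2 _ (h ζ hζ).px_mem_su2)
    (fun ζ hζ ↦ ofReal_smul_mem_su2 _ (h ζ hζ).py_mem_su2) fun ζ hζ ↦ (h ζ hζ).isQuaternionPair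
  refine ⟨fun ζ hζ ↦ (h ζ hζ).contDiffAt.contDiffWithinAt, fun ζ hζ ↦ (h ζ hζ).mem_su2,
    logConformalFactor f, fun ζ hζ ↦ (h ζ hζ).contDiffAt_logConformalFactor.contDiffWithinAt,
    fun ζ hζ ↦ ⟨(h ζ hζ).ip_px_eq_exp, (h ζ hζ).ip_px_px ▸ (h ζ hζ).ip_px_eq_exp,
      (h ζ hζ).ip_px_py⟩,
    F, fun ζ hζ ↦ (hF ζ hζ).1.contDiffWithinAt, fun ζ hζ ↦ ?_⟩
  obtain ⟨-, hunitary, hdet, he1, he2, he3⟩ := hF ζ hζ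
  exact ⟨hunitary, hdet, he1, he2, he3 ▸ (h ζ hζ).ip_laplacian⟩

end IsConformalCMCAt

end Immersion

section Bjorling

open scoped ComplexConjugate

variable {J : Set ℝ} {X Y f₀ v : ℝ → M2}

theorem exists_pos_analyticOnNhd_ip_smul_eq (hX : AnalyticOnNhd ℝ X J) (hY : AnalyticOnNhd ℝ Y J)
    (hXsu : ∀ x ∈ J, X x ∈ su2) (hYsu : ∀ x ∈ J, Y x ∈ su2) (hX0 : ∀ x ∈ J, X x ≠ 0)
    (hY0 : ∀ x ∈ J, Y x ≠ 0) :
    ∃ c : ℝ → ℝ, AnalyticOnNhd ℝ c J ∧ ∀ x ∈ J, 0 < c x ∧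
      ip (X x) (X x) = ip ((c x : ℂ) • Y x) ((c x : ℂ) • Y x) := by
  have hlog {Z : ℝ → M2} (hZ : AnalyticOnNhd ℝ Z J) (hZsu : ∀ x ∈ J, Z x ∈ su2)
      (hZ0 : ∀ x ∈ J, Z x ≠ 0) : AnalyticOnNhd ℝ (fun x ↦ Real.log (ip (Z x) (Z x)).re) J :=
    fun x hx ↦ ((reCLM.analyticAt _).fun_comp
      ((analyticOnNhd_ip_self _ trivial).restrictScalars.fun_comp (hZ x hx))).log
        (re_ip_self_pos (hZsu x hx) (hZ0 x hx))
  refine ⟨fun x ↦ Real.exp ((Real.log (ip (X x) (X x)).re - Real.log (ip (Y x) (Y x)).re) / 2),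
    fun x hx ↦ (((hlog hX hXsu hX0 x hx).sub (hlog hY hYsu hY0 x hx)).div_const).rexp,
    fun x hx ↦ ⟨Real.exp_pos _, ?_⟩⟩
  have hXpos := re_ip_self_pos (hXsu x hx) (hX0 x hx)
  have hYpos := re_ip_self_pos (hYsu x hx) (hY0 x hx)
  rw [ip_smul_smul, ← ofReal_re_ip (hXsu x hx) (hXsu x hx), ← ofReal_re_ip (hYsu x hx) (hYsu x hx)]
  norm_cast
  rw [← Real.exp_add, add_halves, Real.exp_sub, Real.exp_log hXpos,
    Real.exp_log hYpos, div_mul_cancel₀ _ (ne_of_gt hYpos)]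

/-- `a` is holomorphic near `J` and equals `(X - i Y) / 2` on `J`, where `X` and `Y` are the partial
derivatives along `J` of a conformal map into `su(2)`. -/
structure IsBjorlingData (J : Set ℝ) (X Y : ℝ → M2) (a : ℂ → M2) : Prop where
  analyticAt {x : ℝ} (hx : x ∈ J) : AnalyticAt ℂ a x
  trace_eq_zero {x : ℝ} (hx : x ∈ J) : (a x).trace = 0
  ip_eq_zero {x : ℝ} (hx : x ∈ J) : ip (a x) (a x) = 0
  add_skewConj {x : ℝ} (hx : x ∈ J) : a x + skewConj (a x) = X x
  I_smul_add_skewConj {x : ℝ} (hx : x ∈ J) : I • a x + conj I • skewConj (a x) = Y x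

theorem exists_isBjorlingData (hX : AnalyticOnNhd ℝ X J) (hY : AnalyticOnNhd ℝ Y J)
    (hXsu : ∀ x ∈ J, X x ∈ su2) (hYsu : ∀ x ∈ J, Y x ∈ su2) (hXY : ∀ x ∈ J, ip (X x) (Y x) = 0)
    (hnorm : ∀ x ∈ J, ip (X x) (X x) = ip (Y x) (Y x)) : ∃ a, IsBjorlingData J X Y a := by
  have hdz : AnalyticOnNhd ℝ (fun x ↦ dzOfPartials (X x) (Y x)) J := fun x hx ↦
    ((hX x hx).fun_sub ((hY x hx).fun_const_smul (c := I))).fun_const_smul (c := (2 : ℂ)⁻¹)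
  obtain ⟨a, ha⟩ := exists_analyticAt_eqOn_real (V := M2) hdz
  refine ⟨a, fun hx ↦ (ha _ hx).1, ?_, ?_, ?_, ?_⟩ <;> intro x hx <;> rw [(ha x hx).2]
  · exact trace_dzOfPartials (hXsu x hx) (hYsu x hx)
  · exact ip_dzOfPartials_self (hXY x hx) (hnorm x hx)
  · exact dzOfPartials_add_skewConj (hXsu x hx) (hYsu x hx)
  · exact I_smul_dzOfPartials_add_skewConj (hXsu x hx) (hYsu x hx)

namespace IsBjorlingData

variable {a : ℂ → M2} {x : ℝ}

theorem eventually_hasDerivAt (h : IsBjorlingData J (deriv f₀) Y a) (hJ : IsOpen J)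
    (hf₀ : DifferentiableOn ℝ f₀ J) (hx : x ∈ J) :
    ∀ᶠ t : ℝ in 𝓝 x, HasDerivAt f₀ (a t + skewConj (a t)) t := by
  filter_upwards [hJ.mem_nhds hx] with t ht
  rw [h.add_skewConj ht]
  exact (hf₀.differentiableAt (hJ.mem_nhds ht)).hasDerivAt

theorem eventually_isConformalCMCAt (h : IsBjorlingData J (deriv f₀) Y a) (hJ : IsOpen J)
    (hf₀ : DifferentiableOn ℝ f₀ J) (hsu : ∀ x ∈ J, f₀ x ∈ su2) (hreg : ∀ x ∈ J, deriv f₀ x ≠ 0)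
    (H : ℝ) (hx : x ∈ J) : ∀ᶠ ζ in 𝓝 (x : ℂ), IsConformalCMCAt H (cmcSurface H a f₀) ζ :=
  eventually_isConformalCMCAt_cmcSurface H (h.analyticAt hx) (h.eventually_hasDerivAt hJ hf₀ hx)
    (by filter_upwards [hJ.mem_nhds hx] with t ht using h.trace_eq_zero ht)
    (by filter_upwards [hJ.mem_nhds hx] with t ht using h.ip_eq_zero ht) (hsu x hx)
    ((h.add_skewConj hx).symm ▸ hreg x hx)

theorem py_cmcSurface (h : IsBjorlingData J (deriv f₀) Y a) (hJ : IsOpen J)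
    (hf₀ : DifferentiableOn ℝ f₀ J) (H : ℝ) (hx : x ∈ J) : py (cmcSurface H a f₀) x = Y x := by
  have hderiv := (eventually_hasFDerivAt_cmcSurface H (h.analyticAt hx)
    (h.eventually_hasDerivAt hJ hf₀ hx)).self_of_nhds
  rw [py_eq_of_hasFDerivAt hderiv, cmcDz_ofReal H (h.analyticAt hx), h.I_smul_add_skewConj hx]

end IsBjorlingData

end Bjorling

theorem bjorling_existence_general
    (J : Set ℝ) (hJo : IsOpen J) (hJc : J.OrdConnected)
    (f₀ v : ℝ → M2)
    (hf₀ : AnalyticOnNhd ℝ f₀ J) (hv : AnalyticOnNhd ℝ v J)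
    (hf₀su : ∀ x ∈ J, (f₀ x)ᴴ = -(f₀ x) ∧ (f₀ x).trace = 0)
    (hvsu : ∀ x ∈ J, (v x)ᴴ = -(v x) ∧ (v x).trace = 0)
    (hreg : ∀ x ∈ J, deriv f₀ x ≠ 0)
    (hvnz : ∀ x ∈ J, v x ≠ 0)
    (horth : ∀ x ∈ J, ip (v x) (deriv f₀ x) = 0)
    (H : ℝ) :
    ∃ S : Set ℂ, IsOpen S ∧ (∀ x ∈ J, (x : ℂ) ∈ S) ∧
      ∃ f : ℂ → M2, IsCMCImmersion S H f ∧
        (∀ x ∈ J, f (x : ℂ) = f₀ x) ∧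
        (∀ x ∈ J, ∃ c : ℝ, 0 < c ∧ py f (x : ℂ) = (c : ℂ) • v x) := by
  have hdf₀su : ∀ x ∈ J, deriv f₀ x ∈ su2 := fun x hx ↦
    deriv_mem_submodule isClosed_su2 (hf₀ x hx).differentiableAt
      ((hJo.eventually_mem hx).mono hf₀su)
  obtain ⟨c, hc, hc_pos_norm⟩ :=
    exists_pos_analyticOnNhd_ip_smul_eq hf₀.deriv hv hdf₀su hvsu hreg hvnz
  obtain ⟨a, ha⟩ := exists_isBjorlingData (Y := fun x ↦ (c x : ℂ) • v x) hf₀.deriv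
    (fun x hx ↦ ((ofRealCLM.analyticAt _).fun_comp (hc x hx)).smul (hv x hx)) hdf₀su
    (fun x hx ↦ ofReal_smul_mem_su2 (c x) (hvsu x hx))
    (fun x hx ↦ (ip_smul_right _ _ _).trans
      (mul_eq_zero_of_right _ ((ip_comm _ _).trans (horth x hx))))
    (fun x hx ↦ (hc_pos_norm x hx).2)
  obtain ⟨S, hS, hCMC⟩ := exists_isVerticalNhd hJo fun x hx ↦
    ha.eventually_isConformalCMCAt hJo hf₀.differentiableOn hf₀su hreg H hx
  have hSc (hne : S.Nonempty) : SimplyConnectedSpace S :=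
    have := hS.contractibleSpace hJc hne
    inferInstance
  exact ⟨S, hS.isOpen, fun x ↦ hS.ofReal_mem, cmcSurface H a f₀,
    IsConformalCMCAt.isCMCImmersion hS.isOpen hSc hCMC, fun x _ ↦ cmcSurface_ofReal H a f₀ x,
    fun x hx ↦ ⟨c x, (hc_pos_norm x hx).1, ha.py_cmcSurface hJo hf₀.differentiableOn H hx⟩⟩

/-- solution of the Björling problem for non-minimal CMC surfaces
(existence): given a regular real analytic curve `f₀` in su(2) = E³, a nonvanishing real
analytic orthogonal vector field `v` along it, and `H ≠ 0`, there is a conformal CMC `H`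
immersion containing the curve whose tangent planes along the curve are spanned by
`f₀′` and `v`. -/
theorem bjorling_existence
    (J : Set ℝ) (hJo : IsOpen J) (hJc : J.OrdConnected)
    (f₀ v : ℝ → M2)
    (hf₀ : AnalyticOnNhd ℝ f₀ J) (hv : AnalyticOnNhd ℝ v J)
    (hf₀su : ∀ x ∈ J, (f₀ x)ᴴ = -(f₀ x) ∧ (f₀ x).trace = 0)
    (hvsu : ∀ x ∈ J, (v x)ᴴ = -(v x) ∧ (v x).trace = 0)
    (hreg : ∀ x ∈ J, deriv f₀ x ≠ 0)
    (hvnz : ∀ x ∈ J, v x ≠ 0)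
    (horth : ∀ x ∈ J, ip (v x) (deriv f₀ x) = 0)
    (H : ℝ) (hH : H ≠ 0) :
    ∃ S : Set ℂ, IsOpen S ∧ (∀ x ∈ J, (x : ℂ) ∈ S) ∧
      ∃ f : ℂ → M2, IsCMCImmersion S H f ∧
        (∀ x ∈ J, f (x : ℂ) = f₀ x) ∧
        (∀ x ∈ J, ∃ c : ℝ, 0 < c ∧ py f (x : ℂ) = (c : ℂ) • v x) :=
  bjorling_existence_general J hJo hJc f₀ v hf₀ hv hf₀su hvsu hreg hvnz horth H
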